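/- arXiv:2109.11202 — 5 statements merged into one kernel-verified Lean document; each statement's English description precedes it below -/
import Mathlib

section
/- Let Ω ⊆ ℝⁿ (n ≥ 1) be a bounded open set, s > 0, and 1 ≤ i ≤ n. For every smooth real-valued function u compactly supported in Ω and every x ∈ ℝⁿ, writing x_i for the i-th coordinate function, one has F⁻¹[ y ↦ |y|^{2s} F[x_i u](y) ](x) − x_i · F⁻¹[ y ↦ |y|^{2s} F[u](y) ](x) = −√(−1) · F⁻¹[ y ↦ 2s |y|^{2s−2} y_i F[u](y) ](x). In particular, on Ω the commutator ((-Δ)^s|_Ω ∘ x_i − x_i ∘ (-Δ)^s|_Ω)u equals −√(−1) · F⁻¹[2s |y|^{2s−2} y_i Fu]. -/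
/-! The identity is an integration by parts on the Fourier side. Put `U = F[u]`. Differentiating under
the integral gives `∂ᵢU = -i F[xᵢu]` (`hasLineDerivAt_fourierT`), so integrating
`∂ᵢ (e^{i⟨x,y⟩} |y|^{2s} U(y))` over `ℝⁿ` gives
`i xᵢ ∫ e^{i⟨x,y⟩} |y|^{2s} U + ∫ e^{i⟨x,y⟩} 2s |y|^{2s-2} yᵢ U - i ∫ e^{i⟨x,y⟩} |y|^{2s} F[xᵢu] = 0`,
which is the claim up to a factor `i`.

For small `s` the multiplier `|y|^{2s}` is not differentiable at the origin. It is therefore replaced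
by the smooth multiplier `(|y|² + ε)^s`, for which the integration by parts is legitimate because `U`
and `F[xᵢu]` are Schwartz functions (`exists_schwartz_eq_fourierT`). Then `ε → 0` by dominated
convergence (`integrable_and_tendsto_integral_regularized`): the multiplier itself is at most
`(1 + |y|²)^s`, and its derivative is bounded by a constant times `(1 + |y|²)^s + 1_{|y|<1} |y|^{2s-1}`
(`norm_regularized_deriv_le`), where `|y|^{2s-1}` is integrable near the origin since `2s - 1 > -n`. -/

open MeasureTheory Real Complex
open scoped RealInnerProductSpace

/-- The unitary Fourier transform on `ℝⁿ`:
`F[u](y) = (2π)^{-n/2} ∫ e^{-i⟨x,y⟩} u(x) dx`. -/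
noncomputable def fourierT (n : ℕ) (u : EuclideanSpace ℝ (Fin n) → ℂ)
    (y : EuclideanSpace ℝ (Fin n)) : ℂ :=
  (((2 * Real.pi) ^ (-(n : ℝ) / 2) : ℝ) : ℂ) *
    ∫ x : EuclideanSpace ℝ (Fin n), Complex.exp (-(Complex.I * ((⟪x, y⟫ : ℝ) : ℂ))) * u x

/-- The inverse unitary Fourier transform on `ℝⁿ`:
`F⁻¹[w](x) = (2π)^{-n/2} ∫ e^{i⟨x,y⟩} w(y) dy`. -/
noncomputable def invFourierT (n : ℕ) (w : EuclideanSpace ℝ (Fin n) → ℂ)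
    (x : EuclideanSpace ℝ (Fin n)) : ℂ :=
  (((2 * Real.pi) ^ (-(n : ℝ) / 2) : ℝ) : ℂ) *
    ∫ y : EuclideanSpace ℝ (Fin n), Complex.exp (Complex.I * ((⟪x, y⟫ : ℝ) : ℂ)) * w y

/-- The fractional Laplacian restricted to `Ω`:
`((-Δ)^s|_Ω f)(x) = F⁻¹[y ↦ |y|^{2s} F[f·χ_Ω](y)](x)` (real part; the expression is
real-valued for real `f`). -/
noncomputable def fracLap {n : ℕ} (s : ℝ) (Ω : Set (EuclideanSpace ℝ (Fin n)))
    (f : EuclideanSpace ℝ (Fin n) → ℝ) (x : EuclideanSpace ℝ (Fin n)) : ℝ :=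
  (invFourierT n (fun y => ((‖y‖ ^ (2 * s) : ℝ) : ℂ) *
      fourierT n (fun z => ((Ω.indicator f z : ℝ) : ℂ)) y) x).re

open scoped FourierTransform SchwartzMap ContDiff
open Filter Topology

/-- The unitary transform with angular frequencies is a rescaling of Mathlib's `𝓕`, whose kernel is
`e^{-2πi⟨x,y⟩}`. -/
lemma fourierT_eq_fourier {n : ℕ} (v : EuclideanSpace ℝ (Fin n) → ℂ)
    (y : EuclideanSpace ℝ (Fin n)) :
    fourierT n v y = (((2 * Real.pi) ^ (-(n : ℝ) / 2) : ℝ) : ℂ) * 𝓕 v ((2 * π)⁻¹ • y) := by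
  rw [fourierT, Real.fourier_eq']
  congr 2
  ext z
  rw [smul_eq_mul, inner_smul_right]
  congr 2
  have : (π : ℂ) ≠ 0 := by exact_mod_cast Real.pi_ne_zero
  push_cast
  field_simp

lemma exists_schwartz_eq_fourierT {n : ℕ} {v : EuclideanSpace ℝ (Fin n) → ℂ}
    (hv : ContDiff ℝ ∞ v) (hc : HasCompactSupport v) :
    ∃ f : 𝓢(EuclideanSpace ℝ (Fin n), ℂ), ⇑f = fourierT n v := by
  have h2π : (2 * π)⁻¹ ≠ 0 := by positivity
  let e : EuclideanSpace ℝ (Fin n) ≃L[ℝ] EuclideanSpace ℝ (Fin n) :=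
    ContinuousLinearEquiv.smulLeft (Units.mk0 _ h2π)
  refine ⟨(((2 * Real.pi) ^ (-(n : ℝ) / 2) : ℝ) : ℂ) •
    SchwartzMap.compCLMOfContinuousLinearEquiv ℂ e (𝓕 (hc.toSchwartzMap hv)), ?_⟩
  ext y
  rw [fourierT_eq_fourier]
  rfl

/-- `∂ᵢ F[v] = -i F[xᵢ v]`, from differentiation under the integral sign. -/
lemma hasLineDerivAt_fourierT {n : ℕ} {v : EuclideanSpace ℝ (Fin n) → ℂ}
    (hv : Continuous v) (hc : HasCompactSupport v) (i : Fin n) (y : EuclideanSpace ℝ (Fin n)) :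
    HasLineDerivAt ℝ (fourierT n v) (-I * fourierT n (fun z => (z i : ℂ) * v z) y) y
      (EuclideanSpace.single i 1) := by
  have h1 : Integrable v := hv.integrable_of_hasCompactSupport hc
  have h2 : Integrable (fun z => ‖z‖ * ‖v z‖) :=
    (continuous_norm.mul hv.norm).integrable_of_hasCompactSupport hc.norm.mul_left
  have h3 : Integrable (VectorFourier.fourierSMulRight (innerSL ℝ) v) := by
    refine Continuous.integrable_of_hasCompactSupport ?_ ?_
    · unfold VectorFourier.fourierSMulRight
      fun_prop
    · refine hc.mono fun z hz => ?_
      contrapose! hz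
      simp only [Function.mem_support, ne_eq, not_not] at hz ⊢
      ext w
      simp [hz]
  have h := (Real.hasFDerivAt_fourier h1 h2 ((2 * π)⁻¹ • y)).comp y
    ((hasFDerivAt_id y).const_smul (2 * π)⁻¹)
  have h4 := (h.const_mul (((2 * Real.pi) ^ (-(n : ℝ) / 2) : ℝ) : ℂ)).hasLineDerivAt
    (EuclideanSpace.single i 1)
  have h5 : fourierT n v = fun y =>
    (((2 * Real.pi) ^ (-(n : ℝ) / 2) : ℝ) : ℂ) * (𝓕 v ∘ ((2 * π)⁻¹ • id)) y := by
    ext y; rw [fourierT_eq_fourier]; rfl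
  rw [h5]
  refine HasDerivAt.congr_deriv (h4 : HasDerivAt _ _ _) ?_
  rw [fourierT_eq_fourier]
  have hπ : (π : ℂ) ≠ 0 := by exact_mod_cast Real.pi_ne_zero
  simp only [smul_apply, ContinuousLinearMap.comp_apply,
    ContinuousLinearMap.id_apply, map_smul]
  rw [Real.fourier_continuousLinearMap_apply h3]
  have h6 : (fun z => (VectorFourier.fourierSMulRight (innerSL ℝ) v z)
      (EuclideanSpace.single i (1 : ℝ))) = fun z => (-(2 * π * I)) • ((z i : ℂ) * v z) := by
    ext z
    rw [VectorFourier.fourierSMulRight_apply, innerSL_apply_apply]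
    simp [EuclideanSpace.inner_single_right]
  rw [h6, Real.fourier_eq, Real.fourier_eq]
  simp_rw [smul_comm _ (-(2 * π * I) : ℂ)]
  rw [integral_smul]
  simp only [smul_eq_mul, Complex.real_smul]
  push_cast
  field_simp

lemma SchwartzMap.integrable_one_add_norm_sq_rpow_mul {n : ℕ}
    (f : 𝓢(EuclideanSpace ℝ (Fin n), ℂ)) (r : ℝ) :
    Integrable (fun y => (1 + ‖y‖ ^ 2) ^ r * ‖f y‖) := by
  have hg := Function.hasTemperateGrowth_one_add_norm_sq_rpow (EuclideanSpace ℝ (Fin n)) r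
  refine (SchwartzMap.smulLeftCLM ℂ
    (fun y : EuclideanSpace ℝ (Fin n) => (1 + ‖y‖ ^ 2) ^ r) f).integrable (μ := volume)
    |>.norm.congr (.of_forall fun y => ?_)
  simp only [SchwartzMap.smulLeftCLM_apply_apply hg, norm_smul]
  rw [Real.norm_of_nonneg (by positivity)]

/-- The singularity `‖y‖ ^ a`, `a > -1`, is integrable at the origin in every dimension `n ≥ 1`. It is
used with `a = 2 * s - 1`, the size of the gradient of `‖y‖ ^ (2 * s)`. -/
lemma SchwartzMap.integrable_indicator_norm_rpow_mul {n : ℕ} (hn : 1 ≤ n)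
    (f : 𝓢(EuclideanSpace ℝ (Fin n), ℂ)) {a : ℝ} (ha : -1 < a) :
    Integrable (fun y => (Metric.ball 0 1).indicator (fun y => ‖y‖ ^ a) y * ‖f y‖) := by
  have hn' : (1 : ℝ) ≤ n := by exact_mod_cast hn
  have h : IntegrableOn (fun y : EuclideanSpace ℝ (Fin n) => ‖y‖ ^ a) (Metric.ball 0 1) := by
    refine integrableOn_ball_of_norm_le_rpow (C := 1) (α := -a) (by simpa using hn) ?_ ?_ ?_
    · simp only [finrank_euclideanSpace, Fintype.card_fin]
      linarith
    · refine .of_forall fun y => ?_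
      rw [Real.norm_of_nonneg (by positivity)]
      simp
    · exact (measurable_norm.pow_const a).aestronglyMeasurable
  refine (h.integrable_indicator measurableSet_ball).mul_bdd (c := SchwartzMap.seminorm ℝ 0 0 f)
    f.continuous.norm.aestronglyMeasurable (.of_forall fun y => ?_)
  simpa using SchwartzMap.norm_le_seminorm ℝ f y

/-- A bound, uniform in `0 < ε ≤ 1`, for the `i`-th partial derivative of `(‖y‖² + ε)^s`. Since
`|yᵢ| ≤ (‖y‖² + ε)^{1/2}`, the derivative is at most `2s (‖y‖² + ε)^{s - 1/2}`, which is of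
polynomial growth if `s ≥ 1/2` and at most `2s ‖y‖^{2s - 1}` if `s ≤ 1/2`; in the latter case the
power of `‖y‖` is needed only on the unit ball. -/
lemma norm_regularized_deriv_le {n : ℕ} {s ε : ℝ} (hs : 0 < s) (hε : 0 < ε) (hε1 : ε ≤ 1)
    (i : Fin n) (y : EuclideanSpace ℝ (Fin n)) :
    |2 * s * (‖y‖ ^ 2 + ε) ^ (s - 1) * y i| ≤
      2 * s * ((1 + ‖y‖ ^ 2) ^ s
        + (Metric.ball 0 1).indicator (fun y => ‖y‖ ^ (2 * s - 1)) y) := by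
  have ht : 0 < ‖y‖ ^ 2 + ε := by positivity
  have hind : 0 ≤ (Metric.ball 0 1).indicator (fun y => ‖y‖ ^ (2 * s - 1)) y :=
    Set.indicator_nonneg (fun _ _ => by positivity) _
  have hone : (1 : ℝ) ≤ (1 + ‖y‖ ^ 2) ^ s := Real.one_le_rpow (by nlinarith [sq_nonneg ‖y‖]) hs.le
  rcases eq_or_ne y 0 with rfl | hy
  · simp only [PiLp.zero_apply, mul_zero, abs_zero]
    positivity
  have hy' : 0 < ‖y‖ := norm_pos_iff.mpr hy
  have hyi : |y i| ≤ (‖y‖ ^ 2 + ε) ^ (1 / 2 : ℝ) := by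
    rw [← Real.sqrt_eq_rpow]
    exact (PiLp.norm_apply_le y i).trans (Real.le_sqrt_of_sq_le (by linarith))
  rw [abs_mul, abs_mul, abs_of_pos (by positivity : 0 < 2 * s), abs_of_pos (by positivity),
    mul_assoc]
  gcongr
  calc (‖y‖ ^ 2 + ε) ^ (s - 1) * |y i|
      ≤ (‖y‖ ^ 2 + ε) ^ (s - 1) * (‖y‖ ^ 2 + ε) ^ (1 / 2 : ℝ) := by gcongr
    _ = (‖y‖ ^ 2 + ε) ^ (s - 1 / 2) := by rw [← Real.rpow_add ht]; ring_nf
    _ ≤ _ := ?_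
  rcases le_total (1 / 2) s with h | h
  · calc (‖y‖ ^ 2 + ε) ^ (s - 1 / 2) ≤ (1 + ‖y‖ ^ 2) ^ (s - 1 / 2) :=
          Real.rpow_le_rpow ht.le (by linarith) (by linarith)
      _ ≤ (1 + ‖y‖ ^ 2) ^ s :=
          Real.rpow_le_rpow_of_exponent_le (by nlinarith [sq_nonneg ‖y‖]) (by linarith)
      _ ≤ _ := by linarith
  · have h1 : (‖y‖ ^ 2 + ε) ^ (s - 1 / 2) ≤ ‖y‖ ^ (2 * s - 1) := by
      calc (‖y‖ ^ 2 + ε) ^ (s - 1 / 2) ≤ (‖y‖ ^ 2) ^ (s - 1 / 2) :=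
            Real.rpow_le_rpow_of_nonpos (by positivity) (by linarith) (by linarith)
        _ = ‖y‖ ^ (2 * s - 1) := by
            rw [← Real.rpow_natCast, ← Real.rpow_mul hy'.le]; push_cast; ring_nf
    by_cases hb : y ∈ Metric.ball (0 : EuclideanSpace ℝ (Fin n)) 1
    · rw [Set.indicator_of_mem hb]
      linarith
    · have : 1 ≤ ‖y‖ := by simpa using hb
      have := Real.rpow_le_one_of_one_le_of_nonpos this (by linarith : 2 * s - 1 ≤ 0)
      linarith

lemma hasLineDerivAt_regularized {n : ℕ} (s : ℝ) {ε : ℝ} (hε : 0 < ε)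
    (i : Fin n) (x y : EuclideanSpace ℝ (Fin n)) :
    HasLineDerivAt ℝ
      (fun y => cexp (I * (⟪x, y⟫ : ℝ)) * (((‖y‖ ^ 2 + ε) ^ s : ℝ) : ℂ))
      (I * x i * cexp (I * (⟪x, y⟫ : ℝ)) * (((‖y‖ ^ 2 + ε) ^ s : ℝ) : ℂ)
        + cexp (I * (⟪x, y⟫ : ℝ)) * ((2 * s * (‖y‖ ^ 2 + ε) ^ (s - 1) * y i : ℝ) : ℂ))
      y (EuclideanSpace.single i 1) := by
  have h0 : HasDerivAt (fun t : ℝ => y + t • EuclideanSpace.single i (1 : ℝ))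
      (EuclideanSpace.single i (1 : ℝ)) 0 := by
    simpa using ((hasDerivAt_id (0 : ℝ)).smul_const (EuclideanSpace.single i (1 : ℝ))).const_add y
  have h1 := ((hasDerivAt_const (0 : ℝ) x).inner ℝ h0).ofReal_comp.const_mul I |>.cexp
  have h2 := ((h0.norm_sq.add_const ε).rpow_const (p := s)
    (Or.inl (by positivity))).ofReal_comp
  refine HasDerivAt.congr_deriv (h1.mul h2 : HasDerivAt _ _ _) ?_
  simp [EuclideanSpace.inner_single_right]
  ring

/-- Dominated convergence for regularized multipliers `m ε → m₀` acting on a Schwartz function `f`.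
Convergence is required only away from the origin, a null set because `n ≥ 1`. -/
lemma integrable_and_tendsto_integral_regularized {n : ℕ} (hn : 1 ≤ n)
    (x : EuclideanSpace ℝ (Fin n)) (f : 𝓢(EuclideanSpace ℝ (Fin n), ℂ))
    {m : ℝ → EuclideanSpace ℝ (Fin n) → ℝ} {m₀ b : EuclideanSpace ℝ (Fin n) → ℝ}
    (hm : ∀ ε, 0 < ε → Continuous (m ε)) (hb : Integrable fun y => b y * ‖f y‖)
    (hmb : ∀ ε, 0 < ε → ε ≤ 1 → ∀ y, |m ε y| ≤ b y)
    (hlim : ∀ y ≠ 0, Tendsto (fun ε => m ε y) (𝓝[>] 0) (𝓝 (m₀ y))) :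
    (∀ ε, 0 < ε → ε ≤ 1 →
      Integrable fun y => cexp (I * (⟪x, y⟫ : ℝ)) * ((m ε y : ℂ) * f y)) ∧
    Tendsto (fun ε => ∫ y, cexp (I * (⟪x, y⟫ : ℝ)) * ((m ε y : ℂ) * f y)) (𝓝[>] 0)
      (𝓝 (∫ y, cexp (I * (⟪x, y⟫ : ℝ)) * ((m₀ y : ℂ) * f y))) := by
  have : Nonempty (Fin n) := ⟨⟨0, hn⟩⟩
  have hmeas : ∀ ε, 0 < ε → AEStronglyMeasurable
      (fun y => cexp (I * (⟪x, y⟫ : ℝ)) * ((m ε y : ℂ) * f y)) volume := by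
    intro ε hε
    have := hm ε hε
    have := f.continuous
    exact Continuous.aestronglyMeasurable (by fun_prop)
  have hbound : ∀ ε, 0 < ε → ε ≤ 1 → ∀ y,
      ‖cexp (I * (⟪x, y⟫ : ℝ)) * ((m ε y : ℂ) * f y)‖ ≤ b y * ‖f y‖ := by
    intro ε hε hε1 y
    rw [norm_mul, norm_mul, Complex.norm_exp_I_mul_ofReal, one_mul, Complex.norm_real]
    exact mul_le_mul_of_nonneg_right (hmb ε hε hε1 y) (norm_nonneg _)
  have hsmall : ∀ᶠ ε : ℝ in 𝓝[>] 0, 0 < ε ∧ ε ≤ 1 :=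
    (Ioc_mem_nhdsGT one_pos : Set.Ioc (0 : ℝ) 1 ∈ 𝓝[>] 0)
  refine ⟨fun ε hε hε1 => hb.mono' (hmeas ε hε) (.of_forall (hbound ε hε hε1)),
    tendsto_integral_filter_of_dominated_convergence _ ?_ ?_ hb ?_⟩
  · exact hsmall.mono fun ε h => hmeas ε h.1
  · exact hsmall.mono fun ε h => .of_forall (hbound ε h.1 h.2)
  · filter_upwards [Measure.ae_ne volume (0 : EuclideanSpace ℝ (Fin n))] with y hy
    exact (((Complex.continuous_ofReal.tendsto _).comp (hlim y hy)).mul_const _).const_mul _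

lemma tendsto_regularized {n : ℕ} (r : ℝ) {y : EuclideanSpace ℝ (Fin n)} (hy : y ≠ 0) :
    Tendsto (fun ε : ℝ => (‖y‖ ^ 2 + ε) ^ r) (𝓝[>] 0) (𝓝 (‖y‖ ^ (2 * r))) := by
  have hy' : 0 < ‖y‖ := norm_pos_iff.mpr hy
  have h : ContinuousAt (fun ε : ℝ => (‖y‖ ^ 2 + ε) ^ r) 0 :=
    ContinuousAt.rpow_const (by fun_prop) (Or.inl (by simpa using hy))
  have h' := h.tendsto.mono_left (nhdsWithin_le_nhds (s := Set.Ioi 0))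
  simpa [Real.rpow_mul hy'.le] using h'

/-- Commutator identity (3.11) of the paper:
`F⁻¹[|y|^{2s} F[x_i u]](x) − x_i F⁻¹[|y|^{2s} F[u]](x) = −i·F⁻¹[2s|y|^{2s−2} y_i F[u]](x)`. -/
theorem fracLap_coordinate_commutator {n : ℕ} (hn : 1 ≤ n) (s : ℝ) (hs : 0 < s)
    (Ω : Set (EuclideanSpace ℝ (Fin n))) (hΩo : IsOpen Ω) (hΩb : Bornology.IsBounded Ω)
    (i : Fin n) (u : EuclideanSpace ℝ (Fin n) → ℝ)
    (hus : ContDiff ℝ (⊤ : ℕ∞) u) (huc : HasCompactSupport u) (huΩ : tsupport u ⊆ Ω)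
    (x : EuclideanSpace ℝ (Fin n)) :
    invFourierT n (fun y => ((‖y‖ ^ (2 * s) : ℝ) : ℂ) *
        fourierT n (fun z => ((z i * u z : ℝ) : ℂ)) y) x
      - (x i : ℂ) * invFourierT n (fun y => ((‖y‖ ^ (2 * s) : ℝ) : ℂ) *
        fourierT n (fun z => ((u z : ℝ) : ℂ)) y) x
      = -Complex.I * invFourierT n (fun y => ((2 * s * ‖y‖ ^ (2 * s - 2) * y i : ℝ) : ℂ) *
        fourierT n (fun z => ((u z : ℝ) : ℂ)) y) x := by
  obtain ⟨v, hv⟩ : ∃ v : EuclideanSpace ℝ (Fin n) → ℂ, v = fun z => ((u z : ℝ) : ℂ) := ⟨_, rfl⟩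
  have hvs : ContDiff ℝ ∞ v := hv ▸ Complex.ofRealCLM.contDiff.comp hus
  have hvc : HasCompactSupport v := hv ▸ huc.comp_left (g := Complex.ofReal) Complex.ofReal_zero
  have hws : ContDiff ℝ ∞ (fun z : EuclideanSpace ℝ (Fin n) => (z i : ℂ) * v z) :=
    (Complex.ofRealCLM.contDiff.comp (EuclideanSpace.proj (𝕜 := ℝ) i).contDiff).mul hvs
  obtain ⟨U, hU⟩ := exists_schwartz_eq_fourierT hvs hvc
  obtain ⟨W, hW⟩ := exists_schwartz_eq_fourierT hws hvc.mul_left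
  have hder := hasLineDerivAt_fourierT hvs.continuous hvc i
  have hzu : (fun z : EuclideanSpace ℝ (Fin n) => ((z i * u z : ℝ) : ℂ))
      = fun z => (z i : ℂ) * v z := by
    ext z; simp [hv]
  rw [hzu, ← hv, ← hU, ← hW]
  rw [← hU, ← hW] at hder
  -- The multiplier `‖y‖ ^ (2 * s)` need not be differentiable at `0` when `s ≤ 1 / 2`, so the
  -- integration by parts is done for `(‖y‖ ^ 2 + ε) ^ s`, after which `ε` tends to `0`.
  have hM : ∀ ε : ℝ, 0 < ε →
      Continuous fun y : EuclideanSpace ℝ (Fin n) => (‖y‖ ^ 2 + ε) ^ s := fun ε hε =>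
    Continuous.rpow_const (by fun_prop) fun y => Or.inl (by positivity)
  have hM' : ∀ ε : ℝ, 0 < ε → Continuous fun y : EuclideanSpace ℝ (Fin n) =>
      2 * s * (‖y‖ ^ 2 + ε) ^ (s - 1) * y i := fun ε hε =>
    (continuous_const.mul (Continuous.rpow_const (by fun_prop)
      fun y => Or.inl (by positivity))).mul (by fun_prop)
  have hMb : ∀ ε : ℝ, 0 < ε → ε ≤ 1 → ∀ y : EuclideanSpace ℝ (Fin n),
      |(‖y‖ ^ 2 + ε) ^ s| ≤ (1 + ‖y‖ ^ 2) ^ s := by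
    intro ε hε hε1 y
    rw [abs_of_nonneg (by positivity)]
    exact Real.rpow_le_rpow (by positivity) (by linarith) hs.le
  have hM'b : Integrable fun y => 2 * s * ((1 + ‖y‖ ^ 2) ^ s
      + (Metric.ball 0 1).indicator (fun y => ‖y‖ ^ (2 * s - 1)) y) * ‖U y‖ := by
    refine (((U.integrable_one_add_norm_sq_rpow_mul s).add
      (U.integrable_indicator_norm_rpow_mul hn (a := 2 * s - 1) (by linarith))).const_mul
        (2 * s)).congr (.of_forall fun y => ?_)
    simp only [Pi.add_apply]
    ring
  obtain ⟨iA, tA⟩ := integrable_and_tendsto_integral_regularized hn x W hM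
    (W.integrable_one_add_norm_sq_rpow_mul s) hMb fun y hy => tendsto_regularized s hy
  obtain ⟨iB, tB⟩ := integrable_and_tendsto_integral_regularized hn x U hM
    (U.integrable_one_add_norm_sq_rpow_mul s) hMb fun y hy => tendsto_regularized s hy
  obtain ⟨iC, tC⟩ := integrable_and_tendsto_integral_regularized hn x U hM' hM'b
    (fun ε hε hε1 y => norm_regularized_deriv_le hs hε hε1 i y)
    (m₀ := fun y => 2 * s * ‖y‖ ^ (2 * s - 2) * y i) (fun y hy => by
      have := tendsto_regularized (s - 1) hy
      rw [mul_sub, mul_one] at this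
      exact (this.const_mul _).mul_const _)
  have hreg : ∀ ε : ℝ, 0 < ε → ε ≤ 1 →
      (∫ y, cexp (I * (⟪x, y⟫ : ℝ)) * ((((‖y‖ ^ 2 + ε) ^ s : ℝ) : ℂ) * W y))
        - x i * (∫ y, cexp (I * (⟪x, y⟫ : ℝ)) * ((((‖y‖ ^ 2 + ε) ^ s : ℝ) : ℂ) * U y))
      = -I * ∫ y, cexp (I * (⟪x, y⟫ : ℝ)) *
          (((2 * s * (‖y‖ ^ 2 + ε) ^ (s - 1) * y i : ℝ) : ℂ) * U y) := by
    intro ε hε hε1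
    have jA := (iA ε hε hε1).const_mul (-I)
    have jB := (iB ε hε hε1).const_mul (I * x i)
    have jC := iC ε hε hε1
    have key := integral_bilinear_hasLineDerivAt_right_eq_neg_left_of_integrable
      (μ := (volume : Measure (EuclideanSpace ℝ (Fin n)))) (B := ContinuousLinearMap.mul ℝ ℂ)
      (f := fun y => cexp (I * (⟪x, y⟫ : ℝ)) * (((‖y‖ ^ 2 + ε) ^ s : ℝ) : ℂ)) (g := U)
      (v := EuclideanSpace.single i 1)
      ((jB.add jC).congr (.of_forall fun y => by
        simp only [Pi.add_apply, ContinuousLinearMap.mul_apply']; ring))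
      (jA.congr (.of_forall fun y => by
        simp only [ContinuousLinearMap.mul_apply']; ring))
      ((iB ε hε hε1).congr (.of_forall fun y => by
        simp only [ContinuousLinearMap.mul_apply']; ring))
      (fun y _ => hasLineDerivAt_regularized s hε i x y) (fun y _ => hder y)
    simp only [ContinuousLinearMap.mul_apply'] at key
    have e1 : ∫ y, cexp (I * (⟪x, y⟫ : ℝ)) * (((‖y‖ ^ 2 + ε) ^ s : ℝ) : ℂ) * (-I * W y)
        = -I * ∫ y, cexp (I * (⟪x, y⟫ : ℝ)) * ((((‖y‖ ^ 2 + ε) ^ s : ℝ) : ℂ) * W y) := by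
      rw [← integral_const_mul]
      congr 1 with y
      ring
    have e2 : ∫ y, (I * x i * cexp (I * (⟪x, y⟫ : ℝ)) * (((‖y‖ ^ 2 + ε) ^ s : ℝ) : ℂ)
          + cexp (I * (⟪x, y⟫ : ℝ)) * ((2 * s * (‖y‖ ^ 2 + ε) ^ (s - 1) * y i : ℝ) : ℂ)) * U y
        = I * x i * (∫ y, cexp (I * (⟪x, y⟫ : ℝ)) * ((((‖y‖ ^ 2 + ε) ^ s : ℝ) : ℂ) * U y))
          + ∫ y, cexp (I * (⟪x, y⟫ : ℝ)) *
            (((2 * s * (‖y‖ ^ 2 + ε) ^ (s - 1) * y i : ℝ) : ℂ) * U y) := by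
      rw [← integral_const_mul, ← integral_add jB jC]
      congr 1 with y
      ring
    rw [e1, e2] at key
    linear_combination I * key + ((∫ y, cexp (I * (⟪x, y⟫ : ℝ)) *
      ((((‖y‖ ^ 2 + ε) ^ s : ℝ) : ℂ) * W y)) - x i * (∫ y, cexp (I * (⟪x, y⟫ : ℝ)) *
      ((((‖y‖ ^ 2 + ε) ^ s : ℝ) : ℂ) * U y))) * I_sq
  have hlim := tendsto_nhds_unique_of_eventuallyEq (tA.sub (tB.const_mul (x i : ℂ)))
    (tC.const_mul (-I)) (Filter.mem_of_superset (Ioc_mem_nhdsGT one_pos)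
      fun ε hε => hreg ε hε.1 hε.2)
  simp only [invFourierT]
  linear_combination (((2 * Real.pi) ^ (-(n : ℝ) / 2) : ℝ) : ℂ) * hlim
end

section
/- Let Ω ⊆ ℝⁿ (n ≥ 1) be a bounded open set, s > 0 with n + 2s > 2, and 1 ≤ i ≤ n. For every smooth real-valued function u compactly supported in Ω and every x ∈ ℝⁿ, writing x_i for the i-th coordinate function, one has 2 x_i · F⁻¹[|y|^{2s} F[x_i u]](x) − x_i² · F⁻¹[|y|^{2s} F[u]](x) − F⁻¹[|y|^{2s} F[x_i² u]](x) = F⁻¹[ y ↦ (2s |y|^{2s−2} + 2s(2s−2)|y|^{2s−4} y_i²) F[u](y) ](x). -/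
/-!
Put `h y = e^{i⟨x,y⟩} F[u](y)`, a Schwartz function. Up to a constant it is the Fourier transform
(in Mathlib's normalization) of `φ₀ z = u (2π z + x)`, and multiplying `u` by a power of the
coordinate multiplies `φ₀` by a power of `2π zᵢ + xᵢ`. The three terms on the left therefore combine
into `∫ |y|^{2s} ∂ᵢ² h` (`second_deriv_fourier`), while the right-hand side is
`∫ (∂ᵢ² |y|^{2s}) h`. The statement thus reduces to the fact that the distributional second derivative
of `|y|^{2s}` is the pointwise one (`core`).

For that, `|y|^{2s}` is replaced by the smooth temperate weight `(|y|² + t)^s`, `t > 0`, for which two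
integrations by parts are legitimate (`regularized`), and `t` tends to `0` by dominated convergence.
The second derivative of the regularized weight is bounded by a constant times `(|y|² + t)^{s-1}`, hence
by `|y|^{2s-2} + (1 + |y|²)^{s-1}`, which is integrable against a Schwartz function because
`n + 2s > 2` (`integrable_singular`).
-/

open MeasureTheory Real Complex
open scoped RealInnerProductSpace

open Filter Topology
open scoped SchwartzMap LineDeriv FourierTransform

/-! ### The regularized weight -/

/-- By dilation this reduces to the Bessel potential `(1 + ‖y‖ ^ 2) ^ r`. -/
lemma rpow_temperate {n : ℕ} {t : ℝ} (ht : 0 < t) (r : ℝ) :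
    (fun y : EuclideanSpace ℝ (Fin n) => (‖y‖ ^ 2 + t) ^ r).HasTemperateGrowth := by
  have h1 := (Function.hasTemperateGrowth_one_add_norm_sq_rpow (EuclideanSpace ℝ (Fin n)) r).comp
    ((√t)⁻¹ • ContinuousLinearMap.id ℝ (EuclideanSpace ℝ (Fin n))).hasTemperateGrowth
  have h2 := (Function.HasTemperateGrowth.const (t ^ r)).mul h1
  convert! h2 using 1
  ext y
  simp only [Pi.mul_apply, Function.comp, smul_apply, ContinuousLinearMap.id_apply,
    norm_smul, norm_inv, Real.norm_eq_abs, abs_of_nonneg (Real.sqrt_nonneg t), mul_pow, inv_pow,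
    Real.sq_sqrt ht.le]
  rw [← Real.mul_rpow ht.le (by positivity)]
  congr 1
  field_simp
  ring

lemma coord_temperate {n : ℕ} (i : Fin n) :
    (fun y : EuclideanSpace ℝ (Fin n) => y i).HasTemperateGrowth :=
  (EuclideanSpace.proj (𝕜 := ℝ) i : EuclideanSpace ℝ (Fin n) →L[ℝ] ℝ).hasTemperateGrowth

lemma integrable_temperate_smul {n : ℕ} {p : EuclideanSpace ℝ (Fin n) → ℝ} (hp : p.HasTemperateGrowth)
    (h : 𝓢(EuclideanSpace ℝ (Fin n), ℂ)) : Integrable (fun y => p y • h y) := by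
  have := (SchwartzMap.smulLeftCLM ℂ p h).integrable (μ := volume)
  rwa [SchwartzMap.smulLeftCLM_apply hp] at this

/-- Integration by parts of a temperate function against a Schwartz function. -/
lemma ibp {n : ℕ} {p q : EuclideanSpace ℝ (Fin n) → ℝ} (hp : p.HasTemperateGrowth)
    (hq : q.HasTemperateGrowth) (m : EuclideanSpace ℝ (Fin n))
    (hd : ∀ y, HasLineDerivAt ℝ p (q y) y m) (h : 𝓢(EuclideanSpace ℝ (Fin n), ℂ)) :
    ∫ y, p y • (∂_{m} h) y = - ∫ y, q y • h y :=
  integral_bilinear_hasLineDerivAt_right_eq_neg_left_of_integrable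
    (B := ContinuousLinearMap.lsmul ℝ ℝ) (v := m) (integrable_temperate_smul hq h)
    (integrable_temperate_smul hp _) (integrable_temperate_smul hp h) (fun y _ => hd y)
    (fun y _ => (h.hasFDerivAt y).hasLineDerivAt m)

lemma rpow_lineDeriv {n : ℕ} {t : ℝ} (ht : 0 < t) (r : ℝ) (i : Fin n)
    (y : EuclideanSpace ℝ (Fin n)) :
    HasLineDerivAt ℝ (fun y : EuclideanSpace ℝ (Fin n) => (‖y‖ ^ 2 + t) ^ r)
      (2 * r * (y i * (‖y‖ ^ 2 + t) ^ (r - 1))) y (EuclideanSpace.single i 1) := by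
  have h := (((hasStrictFDerivAt_norm_sq y).hasFDerivAt.add_const t).rpow_const (p := r)
    (Or.inl (by positivity))).hasLineDerivAt (EuclideanSpace.single i 1)
  convert! h using 1
  simp [EuclideanSpace.inner_single_right]
  ring

lemma coord_rpow_lineDeriv {n : ℕ} {t : ℝ} (ht : 0 < t) (r : ℝ) (i : Fin n)
    (y : EuclideanSpace ℝ (Fin n)) :
    HasLineDerivAt ℝ (fun y : EuclideanSpace ℝ (Fin n) => 2 * r * (y i * (‖y‖ ^ 2 + t) ^ (r - 1)))
      (2 * r * (‖y‖ ^ 2 + t) ^ (r - 1)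
        + 2 * r * (2 * r - 2) * (‖y‖ ^ 2 + t) ^ (r - 2) * y i ^ 2)
      y (EuclideanSpace.single i 1) := by
  have h1 : HasLineDerivAt ℝ (fun y : EuclideanSpace ℝ (Fin n) => y i) 1 y
      (EuclideanSpace.single i 1) := by
    have := ((EuclideanSpace.proj (𝕜 := ℝ) i : EuclideanSpace ℝ (Fin n) →L[ℝ] ℝ).hasFDerivAt
      (x := y)).hasLineDerivAt (EuclideanSpace.single i 1)
    simpa using this
  have h2 := rpow_lineDeriv ht (r - 1) i y
  unfold HasLineDerivAt at *
  have h3 := (h1.mul h2).const_mul (2 * r)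
  convert! h3 using 1
  simp only [zero_smul, add_zero]
  rw [show r - 1 - 1 = r - 2 by ring]
  ring

/-- The distributional identity `∂ᵢ² p = (pointwise second derivative)` for the smooth weight
`p y = (‖y‖ ^ 2 + t) ^ r`, `t > 0`. -/
lemma regularized {n : ℕ} {t : ℝ} (ht : 0 < t) (r : ℝ) (i : Fin n)
    (h : 𝓢(EuclideanSpace ℝ (Fin n), ℂ)) :
    ∫ y : EuclideanSpace ℝ (Fin n), (‖y‖ ^ 2 + t) ^ r •
        (∂_{(EuclideanSpace.single i 1 : EuclideanSpace ℝ (Fin n))}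
          (∂_{(EuclideanSpace.single i 1 : EuclideanSpace ℝ (Fin n))} h)) y
      = ∫ y : EuclideanSpace ℝ (Fin n), (2 * r * (‖y‖ ^ 2 + t) ^ (r - 1)
        + 2 * r * (2 * r - 2) * (‖y‖ ^ 2 + t) ^ (r - 2) * y i ^ 2) • h y := by
  have h0 := rpow_temperate (n := n) ht r
  have h1 := rpow_temperate (n := n) ht (r - 1)
  have h2 := rpow_temperate (n := n) ht (r - 2)
  have hc := coord_temperate i
  have t1 : (fun y : EuclideanSpace ℝ (Fin n) =>
      2 * r * (y i * (‖y‖ ^ 2 + t) ^ (r - 1))).HasTemperateGrowth :=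
    (Function.HasTemperateGrowth.const (2 * r)).mul (hc.mul h1)
  have t2 : (fun y : EuclideanSpace ℝ (Fin n) => 2 * r * (‖y‖ ^ 2 + t) ^ (r - 1)
        + 2 * r * (2 * r - 2) * (‖y‖ ^ 2 + t) ^ (r - 2) * y i ^ 2).HasTemperateGrowth :=
    ((Function.HasTemperateGrowth.const (2 * r)).mul h1).add
      (((Function.HasTemperateGrowth.const (2 * r * (2 * r - 2))).mul h2).mul (hc.pow 2))
  rw [ibp h0 t1 _ (rpow_lineDeriv ht r i), ibp t1 t2 _ (coord_rpow_lineDeriv ht r i), neg_neg]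

/-! ### Integrability and uniform bounds -/

/-- `‖y‖ ^ (2 * r)` is integrable on the unit ball as soon as `-n < 2 * r`; off the ball it is
dominated by the temperate function `(1 + ‖y‖ ^ 2) ^ |r|`. -/
lemma integrable_singular {n : ℕ} (hn : 1 ≤ n) {r : ℝ} (hr : 0 < n + 2 * r)
    (h : 𝓢(EuclideanSpace ℝ (Fin n), ℂ)) :
    Integrable (fun y : EuclideanSpace ℝ (Fin n) => (‖y‖ ^ 2) ^ r * ‖h y‖) := by
  have : Nonempty (Fin n) := ⟨⟨0, hn⟩⟩
  have hmeas : AEStronglyMeasurable (fun y : EuclideanSpace ℝ (Fin n) => (‖y‖ ^ 2) ^ r * ‖h y‖) :=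
    (Measurable.aestronglyMeasurable (by fun_prop)).mul
      h.continuous.norm.aestronglyMeasurable
  obtain ⟨C, hC⟩ : ∃ C, ∀ y, ‖h y‖ ≤ C := by
    obtain ⟨C, -, hC⟩ := h.decay 0 0
    exact ⟨C, fun y => by simpa using hC y⟩
  rw [← integrableOn_univ, ← Set.union_compl_self (Metric.ball (0 : EuclideanSpace ℝ (Fin n)) 1),
    integrableOn_union]
  constructor
  · have h1 : IntegrableOn (fun y : EuclideanSpace ℝ (Fin n) => (‖y‖ ^ 2) ^ r)
        (Metric.ball 0 1) := by
      rw [integrableOn_fun_norm_addHaar volume (f := fun a : ℝ => (a ^ 2) ^ r)]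
      have h2 : IntegrableOn (fun a : ℝ => a ^ ((n : ℝ) - 1 + 2 * r)) (Set.Ioo 0 1) := by
        rw [← integrableOn_Ioc_iff_integrableOn_Ioo, ← intervalIntegrable_iff_integrableOn_Ioc_of_le zero_le_one]
        exact intervalIntegral.intervalIntegrable_rpow' (by linarith)
      refine h2.congr_fun (fun a ha => ?_) measurableSet_Ioo
      have ha0 : 0 < a := ha.1
      simp only [finrank_euclideanSpace, Fintype.card_fin, smul_eq_mul]
      rw [Real.rpow_add ha0, Real.rpow_mul ha0.le, ← Real.rpow_natCast, ← Real.rpow_natCast, Nat.cast_sub hn]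
      norm_num
    refine Integrable.mono' (h1.mul_const C) hmeas.restrict (Filter.Eventually.of_forall fun y => ?_)
    rw [Real.norm_of_nonneg (by positivity)]
    gcongr
    exact hC y
  · have h1 := (integrable_temperate_smul (Function.hasTemperateGrowth_one_add_norm_sq_rpow
      (EuclideanSpace ℝ (Fin n)) |r|) h).norm
    refine Integrable.mono' h1.integrableOn hmeas.restrict ?_
    filter_upwards [ae_restrict_mem (Metric.isOpen_ball.measurableSet.compl)] with y hy
    have hy1 : 1 ≤ ‖y‖ := by simpa using hy
    rw [Real.norm_of_nonneg (by positivity), norm_smul, Real.norm_of_nonneg (by positivity)]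
    gcongr
    exact (Real.rpow_le_rpow_of_exponent_le (by nlinarith) (le_abs_self r)).trans
      (Real.rpow_le_rpow (by positivity) (by linarith) (abs_nonneg r))


/-- A bound on `(a + t) ^ r` uniform in `t ∈ (0, 1]`, valid for both signs of `r`; with
`a = ‖y‖ ^ 2` it provides the dominating function for the limit `t → 0`. -/
lemma rpow_bound {a t : ℝ} (ha : 0 < a) (ht : 0 < t) (ht1 : t ≤ 1) (r : ℝ) :
    (a + t) ^ r ≤ (1 + a) ^ r + a ^ r := by
  rcases le_total 0 r with hr | hr
  · have h1 : (a + t) ^ r ≤ (1 + a) ^ r := Real.rpow_le_rpow (by positivity) (by linarith) hr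
    have h2 : 0 ≤ a ^ r := by positivity
    linarith
  · have h1 : (a + t) ^ r ≤ a ^ r := Real.rpow_le_rpow_of_nonpos ha (by linarith) hr
    have h2 : 0 ≤ (1 + a) ^ r := by positivity
    linarith

/-- Since `y i ^ 2 ≤ ‖y‖ ^ 2 + t`, the second derivative of `(‖y‖ ^ 2 + t) ^ r` is no more
singular than `(‖y‖ ^ 2 + t) ^ (r - 1)`, with a constant independent of `t`. -/
lemma second_bound {n : ℕ} (i : Fin n) (y : EuclideanSpace ℝ (Fin n)) {t : ℝ} (ht : 0 < t) (r : ℝ) :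
    |2 * r * (‖y‖ ^ 2 + t) ^ (r - 1)
        + 2 * r * (2 * r - 2) * (‖y‖ ^ 2 + t) ^ (r - 2) * y i ^ 2|
      ≤ (|2 * r| + |2 * r * (2 * r - 2)|) * (‖y‖ ^ 2 + t) ^ (r - 1) := by
  have hpos : 0 < ‖y‖ ^ 2 + t := by positivity
  have h1 : y i ^ 2 ≤ ‖y‖ ^ 2 + t := by
    have := PiLp.norm_apply_le y i
    rw [Real.norm_eq_abs] at this
    nlinarith [sq_abs (y i), abs_nonneg (y i)]
  have h2 : (‖y‖ ^ 2 + t) ^ (r - 2) * y i ^ 2 ≤ (‖y‖ ^ 2 + t) ^ (r - 1) := by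
    calc _ ≤ (‖y‖ ^ 2 + t) ^ (r - 2) * (‖y‖ ^ 2 + t) := by gcongr
      _ = _ := by rw [← Real.rpow_add_one hpos.ne']; congr 1; ring
  refine (abs_add_le _ _).trans ?_
  rw [add_mul, mul_assoc (2 * r * (2 * r - 2)), abs_mul (2 * r), abs_mul (2 * r * (2 * r - 2)),
    abs_of_pos (Real.rpow_pos_of_pos hpos _), abs_of_nonneg (a := _ * y i ^ 2) (by positivity)]
  gcongr

/-! ### The distributional second derivative of `‖y‖ ^ (2 * s)` -/

/-- The second distributional derivative of `‖y‖ ^ (2 * s)` in direction `i` is its pointwise second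
derivative: the hypothesis on `n + 2 * s` leaves no mass at the origin. -/
lemma core {n : ℕ} (hn : 1 ≤ n) {s : ℝ} (hns : 2 < (n : ℝ) + 2 * s) (i : Fin n)
    (h : 𝓢(EuclideanSpace ℝ (Fin n), ℂ)) :
    ∫ y : EuclideanSpace ℝ (Fin n), ‖y‖ ^ (2 * s) •
        (∂_{(EuclideanSpace.single i 1 : EuclideanSpace ℝ (Fin n))}
          (∂_{(EuclideanSpace.single i 1 : EuclideanSpace ℝ (Fin n))} h)) y
      = ∫ y : EuclideanSpace ℝ (Fin n), (2 * s * ‖y‖ ^ (2 * s - 2)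
        + 2 * s * (2 * s - 2) * ‖y‖ ^ (2 * s - 4) * y i ^ 2) • h y := by
  have : Nonempty (Fin n) := ⟨⟨0, hn⟩⟩
  set g := ∂_{(EuclideanSpace.single i 1 : EuclideanSpace ℝ (Fin n))}
          (∂_{(EuclideanSpace.single i 1 : EuclideanSpace ℝ (Fin n))} h) with hg
  -- The origin, where the weights take junk values, is negligible because `n ≥ 1`.
  have hne : ∀ᵐ y : EuclideanSpace ℝ (Fin n), y ≠ 0 := Measure.ae_ne volume 0
  have hsm : ∀ᶠ t : ℝ in 𝓝[>] 0, t ∈ Set.Ioc (0 : ℝ) 1 := Ioc_mem_nhdsGT one_pos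
  have hint : ∀ (r : ℝ), 0 < n + 2 * r → ∀ f : 𝓢(EuclideanSpace ℝ (Fin n), ℂ),
      Integrable (fun y => ((1 + ‖y‖ ^ 2) ^ r + (‖y‖ ^ 2) ^ r) * ‖f y‖) := fun r hr f => by
    have h1 := (integrable_temperate_smul (Function.hasTemperateGrowth_one_add_norm_sq_rpow
      (EuclideanSpace ℝ (Fin n)) r) f).norm
    refine (h1.add (integrable_singular hn hr f)).congr (Filter.Eventually.of_forall fun y => ?_)
    simp only [Pi.add_apply, norm_smul]
    rw [Real.norm_of_nonneg (by positivity), add_mul]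
  have hlim : ∀ (r : ℝ) (y : EuclideanSpace ℝ (Fin n)), y ≠ 0 →
      Tendsto (fun t : ℝ => (‖y‖ ^ 2 + t) ^ r) (𝓝[>] 0) (𝓝 (‖y‖ ^ (2 * r))) := fun r y hy => by
    have h0 : ‖y‖ ^ 2 + 0 ≠ 0 := by simpa using hy
    have h1 : ContinuousAt (fun t : ℝ => (‖y‖ ^ 2 + t) ^ r) 0 :=
      (continuousAt_const.add continuousAt_id).rpow_const (Or.inl h0)
    have h2 := h1.tendsto.mono_left (nhdsWithin_le_nhds (s := Set.Ioi 0))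
    rwa [add_zero, ← Real.rpow_natCast_mul (norm_nonneg y)] at h2
  have hL : Tendsto (fun t : ℝ => ∫ y : EuclideanSpace ℝ (Fin n), (‖y‖ ^ 2 + t) ^ s • g y)
      (𝓝[>] 0) (𝓝 (∫ y : EuclideanSpace ℝ (Fin n), ‖y‖ ^ (2 * s) • g y)) := by
    refine tendsto_integral_filter_of_dominated_convergence _ ?_ ?_ (hint s (by linarith) g) ?_
    · filter_upwards [hsm] with t ht
      exact (integrable_temperate_smul (rpow_temperate ht.1 s) g).aestronglyMeasurable
    · filter_upwards [hsm] with t ht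
      filter_upwards [hne] with y hy
      have := norm_pos_iff.2 hy
      have ht0 := ht.1
      rw [norm_smul, Real.norm_of_nonneg (by positivity)]
      gcongr
      exact rpow_bound (by positivity) ht.1 ht.2 s
    · filter_upwards [hne] with y hy
      exact (hlim s y hy).smul_const _
  have hR : Tendsto (fun t : ℝ => ∫ y : EuclideanSpace ℝ (Fin n),
        (2 * s * (‖y‖ ^ 2 + t) ^ (s - 1)
          + 2 * s * (2 * s - 2) * (‖y‖ ^ 2 + t) ^ (s - 2) * y i ^ 2) • h y)
      (𝓝[>] 0) (𝓝 (∫ y : EuclideanSpace ℝ (Fin n), (2 * s * ‖y‖ ^ (2 * s - 2)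
        + 2 * s * (2 * s - 2) * ‖y‖ ^ (2 * s - 4) * y i ^ 2) • h y)) := by
    refine tendsto_integral_filter_of_dominated_convergence _ ?_ ?_
      ((hint (s - 1) (by linarith) h).const_mul (|2 * s| + |2 * s * (2 * s - 2)|)) ?_
    · filter_upwards [hsm] with t ht
      have hm : Measurable (fun y : EuclideanSpace ℝ (Fin n) =>
          2 * s * (‖y‖ ^ 2 + t) ^ (s - 1)
            + 2 * s * (2 * s - 2) * (‖y‖ ^ 2 + t) ^ (s - 2) * y i ^ 2) := by fun_prop
      exact hm.aestronglyMeasurable.smul h.continuous.aestronglyMeasurable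
    · filter_upwards [hsm] with t ht
      filter_upwards [hne] with y hy
      have := norm_pos_iff.2 hy
      rw [norm_smul, Real.norm_eq_abs, ← mul_assoc]
      gcongr
      refine (second_bound i y ht.1 s).trans ?_
      gcongr
      exact rpow_bound (by positivity) ht.1 ht.2 (s - 1)
    · filter_upwards [hne] with y hy
      have h1 := hlim (s - 1) y hy
      have h2 := hlim (s - 2) y hy
      rw [show 2 * (s - 1) = 2 * s - 2 by ring] at h1
      rw [show 2 * (s - 2) = 2 * s - 4 by ring] at h2
      exact ((h1.const_mul _).add ((h2.const_mul _).mul_const _)).smul_const _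
  refine tendsto_nhds_unique hL (hR.congr' ?_)
  filter_upwards [hsm] with t ht
  exact (regularized ht.1 s i h).symm

/-! ### Reduction to Mathlib's Fourier transform -/

/-- Multiplying the unitary transform by `e^{i⟨x,y⟩}` translates `f` by `x`; the dilation by `2π`
passes to Mathlib's normalization of the Fourier transform. -/
lemma exp_mul_fourierT {n : ℕ} (f : EuclideanSpace ℝ (Fin n) → ℂ)
    (x y : EuclideanSpace ℝ (Fin n)) :
    Complex.exp (Complex.I * ((⟪x, y⟫ : ℝ) : ℂ)) * fourierT n f y
      = ((((2 * Real.pi) ^ (-(n : ℝ) / 2) * (2 * Real.pi) ^ n : ℝ)) : ℂ) *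
        𝓕 (fun z : EuclideanSpace ℝ (Fin n) => f ((2 * Real.pi) • z + x)) y := by
  have hpi : 0 < 2 * Real.pi := by positivity
  have h1 : 𝓕 (fun z : EuclideanSpace ℝ (Fin n) => f ((2 * Real.pi) • z + x)) y
      = ∫ z, (fun w => Complex.exp (-(Complex.I * ((⟪w, y⟫ : ℝ) : ℂ))) * f (w + x))
          ((2 * Real.pi) • z) := by
    rw [Real.fourier_eq']
    refine integral_congr_ae (Filter.Eventually.of_forall fun z => ?_)
    simp only [smul_eq_mul, inner_smul_left]
    congr 2
    push_cast
    simp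
    ring
  have h2 : ∫ w : EuclideanSpace ℝ (Fin n),
        Complex.exp (-(Complex.I * ((⟪w, y⟫ : ℝ) : ℂ))) * f (w + x)
      = Complex.exp (Complex.I * ((⟪x, y⟫ : ℝ) : ℂ)) *
        ∫ w, Complex.exp (-(Complex.I * ((⟪w, y⟫ : ℝ) : ℂ))) * f w := by
    rw [← integral_const_mul, ← integral_add_right_eq_self
      (fun w => Complex.exp (Complex.I * ((⟪x, y⟫ : ℝ) : ℂ)) *
        (Complex.exp (-(Complex.I * ((⟪w, y⟫ : ℝ) : ℂ))) * f w)) x]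
    refine integral_congr_ae (Filter.Eventually.of_forall fun z => ?_)
    simp only [← mul_assoc, ← Complex.exp_add, inner_add_left]
    congr 2
    push_cast
    ring
  rw [h1, Measure.integral_comp_smul volume
    (fun w => Complex.exp (-(Complex.I * ((⟪w, y⟫ : ℝ) : ℂ))) * f (w + x)), h2, fourierT]
  simp only [finrank_euclideanSpace, Fintype.card_fin]
  rw [abs_of_pos (by positivity), Complex.real_smul]
  push_cast
  have : (2 * (Real.pi : ℂ)) ^ n ≠ 0 := by
    apply pow_ne_zero; exact_mod_cast hpi.ne'
  field_simp

lemma invFourierT_mul_fourierT {n : ℕ} (w : EuclideanSpace ℝ (Fin n) → ℝ)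
    (f : EuclideanSpace ℝ (Fin n) → ℂ) (x : EuclideanSpace ℝ (Fin n))
    (φ : 𝓢(EuclideanSpace ℝ (Fin n), ℂ)) (hφ : ∀ z, φ z = f ((2 * Real.pi) • z + x)) :
    invFourierT n (fun y => ((w y : ℝ) : ℂ) * fourierT n f y) x
      = (((2 * Real.pi) ^ (-(n : ℝ) / 2) : ℝ) : ℂ) *
        (((((2 * Real.pi) ^ (-(n : ℝ) / 2) * (2 * Real.pi) ^ n : ℝ)) : ℂ) *
          ∫ y, w y • (𝓕 φ) y) := by
  have h : (φ : EuclideanSpace ℝ (Fin n) → ℂ) = fun z => f ((2 * Real.pi) • z + x) := funext hφ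
  rw [invFourierT, ← integral_const_mul
    ((((2 * Real.pi) ^ (-(n : ℝ) / 2) * (2 * Real.pi) ^ n : ℝ)) : ℂ)
    (fun y => w y • (𝓕 φ : 𝓢(EuclideanSpace ℝ (Fin n), ℂ)) y)]
  congr 1
  refine integral_congr_ae (Filter.Eventually.of_forall fun y => ?_)
  dsimp only
  rw [mul_left_comm, exp_mul_fourierT, SchwartzMap.fourier_coe, h, Complex.real_smul]
  ring

/-- The dilated translate of a test function, as a Schwartz function. -/
lemma exists_schwartz {n : ℕ} (f : EuclideanSpace ℝ (Fin n) → ℝ) (hf : ContDiff ℝ (⊤ : ℕ∞) f)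
    (hc : HasCompactSupport f) (x : EuclideanSpace ℝ (Fin n)) :
    ∃ φ : 𝓢(EuclideanSpace ℝ (Fin n), ℂ), ∀ z, φ z = ((f ((2 * Real.pi) • z + x) : ℝ) : ℂ) := by
  have hpi : 2 * Real.pi ≠ 0 := by positivity
  have h1 : HasCompactSupport (fun z : EuclideanSpace ℝ (Fin n) =>
      ((f ((2 * Real.pi) • z + x) : ℝ) : ℂ)) := by
    have := hc.comp_homeomorph ((Homeomorph.smulOfNeZero (2 * Real.pi) hpi).trans
      (Homeomorph.addRight x))
    exact this.comp_left (g := ((↑) : ℝ → ℂ)) rfl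
  have h2 : ContDiff ℝ (⊤ : ℕ∞) (fun z : EuclideanSpace ℝ (Fin n) =>
      ((f ((2 * Real.pi) • z + x) : ℝ) : ℂ)) :=
    Complex.ofRealCLM.contDiff.comp (hf.comp (by fun_prop))
  exact ⟨h1.toSchwartzMap h2, fun z => rfl⟩

/-- The algebraic heart of the identity: with `X = 2π zᵢ + xᵢ`, one has
`2 xᵢ X - xᵢ ^ 2 - X ^ 2 = -(2π zᵢ) ^ 2`, which is the symbol of `∂ᵢ²` under the Fourier transform. -/
lemma second_deriv_fourier {n : ℕ} (i : Fin n) (x : EuclideanSpace ℝ (Fin n))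
    (φ₀ φ₁ φ₂ : 𝓢(EuclideanSpace ℝ (Fin n), ℂ))
    (h1 : ∀ z, φ₁ z = (((2 * Real.pi) • z + x) i : ℝ) * φ₀ z)
    (h2 : ∀ z, φ₂ z = ((((2 * Real.pi) • z + x) i : ℝ) : ℂ) ^ 2 * φ₀ z) :
    ∂_{(EuclideanSpace.single i 1 : EuclideanSpace ℝ (Fin n))}
        (∂_{(EuclideanSpace.single i 1 : EuclideanSpace ℝ (Fin n))} (𝓕 φ₀))
      = (2 * (x i : ℂ)) • 𝓕 φ₁ - ((x i : ℂ) ^ 2) • 𝓕 φ₀ - 𝓕 φ₂ := by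
  have hsub (f g : 𝓢(EuclideanSpace ℝ (Fin n), ℂ)) : 𝓕 (f - g) = 𝓕 f - 𝓕 g :=
    map_sub (FourierTransform.fourierCLM ℂ 𝓢(EuclideanSpace ℝ (Fin n), ℂ)) f g
  rw [SchwartzMap.lineDerivOp_fourier_eq, SchwartzMap.lineDerivOp_fourier_eq,
    ← FourierTransform.fourier_smul, ← FourierTransform.fourier_smul,
    ← hsub, ← hsub]
  congr 1
  ext z
  have ht : (fun y : EuclideanSpace ℝ (Fin n) => inner ℝ y
    (EuclideanSpace.single i (1 : ℝ))).HasTemperateGrowth := by fun_prop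
  simp only [smul_apply, sub_apply,
    SchwartzMap.smulLeftCLM_apply_apply ht, h1, h2]
  simp [EuclideanSpace.inner_single_right]
  linear_combination (4 * Real.pi ^ 2 * (z i : ℂ) ^ 2 * φ₀ z) * Complex.I_sq

lemma integral_combination {n : ℕ} (hn : 1 ≤ n) {s : ℝ} (hs : 0 < s) (a b : ℂ)
    (f g h : 𝓢(EuclideanSpace ℝ (Fin n), ℂ)) :
    ∫ y, ‖y‖ ^ (2 * s) • (a • f - b • g - h) y
      = a * (∫ y, ‖y‖ ^ (2 * s) • f y) - b * (∫ y, ‖y‖ ^ (2 * s) • g y)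
        - ∫ y, ‖y‖ ^ (2 * s) • h y := by
  have hint : ∀ f : 𝓢(EuclideanSpace ℝ (Fin n), ℂ),
      Integrable (fun y => ‖y‖ ^ (2 * s) • f y) := fun f => by
    have := integrable_singular hn (r := s) (by positivity) f
    have hm : Measurable (fun y : EuclideanSpace ℝ (Fin n) => ‖y‖ ^ (2 * s)) := by fun_prop
    refine this.mono' (hm.aestronglyMeasurable.smul
      f.continuous.aestronglyMeasurable) (Filter.Eventually.of_forall fun y => ?_)
    rw [norm_smul, Real.norm_of_nonneg (by positivity), ← Real.rpow_natCast_mul (norm_nonneg y)]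
    rfl
  rw [← integral_const_mul, ← integral_const_mul,
    ← integral_sub ((hint f).const_mul a) ((hint g).const_mul b),
    ← integral_sub (f := fun y => a * ‖y‖ ^ (2 * s) • f y - b * ‖y‖ ^ (2 * s) • g y)
      (((hint f).const_mul a).sub ((hint g).const_mul b)) (hint h)]
  refine integral_congr_ae (Filter.Eventually.of_forall fun y => ?_)
  simp only [sub_apply, smul_apply, smul_eq_mul, Complex.real_smul]
  ring

/-! ### The commutator identity -/

/-- Identity (3.12) of the paper:
`2x_i F⁻¹[|y|^{2s} F[x_i u]](x) − x_i² F⁻¹[|y|^{2s} F[u]](x) − F⁻¹[|y|^{2s} F[x_i² u]](x)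
  = F⁻¹[(2s|y|^{2s−2} + 2s(2s−2)|y|^{2s−4} y_i²) F[u]](x)`. -/
theorem fracLap_coordinate_double_commutator {n : ℕ} (hn : 1 ≤ n) (s : ℝ) (hs : 0 < s)
    (hns : 2 < (n : ℝ) + 2 * s)
    (Ω : Set (EuclideanSpace ℝ (Fin n))) (hΩo : IsOpen Ω) (hΩb : Bornology.IsBounded Ω)
    (i : Fin n) (u : EuclideanSpace ℝ (Fin n) → ℝ)
    (hus : ContDiff ℝ (⊤ : ℕ∞) u) (huc : HasCompactSupport u) (huΩ : tsupport u ⊆ Ω)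
    (x : EuclideanSpace ℝ (Fin n)) :
    2 * (x i : ℂ) * invFourierT n (fun y => ((‖y‖ ^ (2 * s) : ℝ) : ℂ) *
        fourierT n (fun z => ((z i * u z : ℝ) : ℂ)) y) x
      - ((x i : ℂ)) ^ 2 * invFourierT n (fun y => ((‖y‖ ^ (2 * s) : ℝ) : ℂ) *
        fourierT n (fun z => ((u z : ℝ) : ℂ)) y) x
      - invFourierT n (fun y => ((‖y‖ ^ (2 * s) : ℝ) : ℂ) *
        fourierT n (fun z => (((z i) ^ 2 * u z : ℝ) : ℂ)) y) x
      = invFourierT n (fun y =>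
          ((2 * s * ‖y‖ ^ (2 * s - 2)
            + 2 * s * (2 * s - 2) * ‖y‖ ^ (2 * s - 4) * (y i) ^ 2 : ℝ) : ℂ) *
          fourierT n (fun z => ((u z : ℝ) : ℂ)) y) x := by
  have hci : ContDiff ℝ (⊤ : ℕ∞) (fun z : EuclideanSpace ℝ (Fin n) => z i) := by fun_prop
  obtain ⟨φ₀, h0⟩ := exists_schwartz u hus huc x
  obtain ⟨φ₁, h1⟩ := exists_schwartz (fun z => z i * u z) (hci.mul hus) huc.mul_left x
  obtain ⟨φ₂, h2⟩ := exists_schwartz (fun z => z i ^ 2 * u z) ((hci.pow 2).mul hus) huc.mul_left x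
  have hD := second_deriv_fourier i x φ₀ φ₁ φ₂ (fun z => by rw [h1, h0]; push_cast; rfl)
    (fun z => by rw [h2, h0]; push_cast; rfl)
  rw [invFourierT_mul_fourierT (fun y => ‖y‖ ^ (2 * s)) (fun z => ((u z : ℝ) : ℂ)) x φ₀ h0,
    invFourierT_mul_fourierT (fun y => ‖y‖ ^ (2 * s)) (fun z => ((z i * u z : ℝ) : ℂ)) x φ₁ h1,
    invFourierT_mul_fourierT (fun y => ‖y‖ ^ (2 * s)) (fun z => ((z i ^ 2 * u z : ℝ) : ℂ)) x φ₂ h2,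
    invFourierT_mul_fourierT (fun y => 2 * s * ‖y‖ ^ (2 * s - 2)
            + 2 * s * (2 * s - 2) * ‖y‖ ^ (2 * s - 4) * (y i) ^ 2) (fun z => ((u z : ℝ) : ℂ)) x φ₀ h0,
    ← core hn hns i (𝓕 φ₀), hD]
  rw [integral_combination hn hs]
  ring
end

section
/- Let Ω ⊆ ℝⁿ (n ≥ 1) be a bounded open set and s > 0 with n + 2s > 2. For every smooth real-valued function u compactly supported in Ω, Σ_{i=1}^{n} ∫_Ω ½[ 2x_i · (-Δ)^s|_Ω(x_i u) − x_i² · (-Δ)^s|_Ω u − (-Δ)^s|_Ω(x_i² u) ] · u dx = s(n + 2s − 2) ∫_{ℝⁿ} |y|^{2(s−1)} |F[u](y)|² dy, where x_1, …, x_n are the coordinate functions on ℝⁿ. -/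
open MeasureTheory Real Complex
open scoped RealInnerProductSpace

/-!
Write `G = 𝓕 u`, a Schwartz function, in Mathlib's normalization of the Fourier transform. By
Plancherel (`integral_fracLap_mul`) every pairing `∫ (-Δ)^s f · h` is, up to the factor `(2π)^{2s}`,
the integral of `‖ξ‖^{2s} Re (𝓕 f · conj (𝓕 h))`. Multiplication by `x_i` becomes `(i / 2π) ∂_i`
(`fourier_coord_mul`), so the `i`-th summand turns into `(2π)^{2s-2}` times
`∫ ‖ξ‖^{2s} (|∂_i G|² + Re (∂_i ∂_i G · conj G))`. The bracket is `½ ∂_i ∂_i ‖G‖²`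
(`second_lineDeriv_normSq`, `integral_theta2_coordinate`).

Summing over `i` leaves `½ ∫ ‖ξ‖^{2s} Δ ‖G‖²`. Integrating by parts twice and using
`Δ ‖ξ‖^{2s} = 2s (n + 2s - 2) ‖ξ‖^{2s-2}` gives the claim (`integral_norm_rpow_mul_laplacian`).
As the weight is singular at the origin, the integration by parts is carried out for
`(‖ξ‖² + ε)^s` and `ε → 0⁺` is taken by dominated convergence; the limit weight `‖ξ‖^{2s-2}` is
locally integrable exactly because `n + 2s > 2`. The remaining powers of `2π` are absorbed by the
change of variables `y = 2π ξ` (`integral_norm_rpow_mul_fourierT`).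
-/

open scoped LineDeriv SchwartzMap FourierTransform ContDiff

/-! ### The Laplacian of `‖x‖^{2s}` tested against Schwartz functions -/


theorem rpow_one_add_of_pos {b : ℝ} (hb : 0 < b) (r : ℝ) : b ^ (1 + r) = b * b ^ r := by
  rw [Real.rpow_add hb, Real.rpow_one]

/-- On the unit ball `‖x‖ ^ a` is integrable because `a > -n` (polar coordinates) while `f` is bounded;
outside it, `‖x‖ ^ a` is at most an integer power of `‖x‖`, which `f` absorbs. -/
theorem integrable_norm_rpow_mul_schwartz {n : ℕ} (hn : 1 ≤ n) {a : ℝ} (ha : -(n : ℝ) < a)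
    (f : 𝓢(EuclideanSpace ℝ (Fin n), ℝ)) :
    Integrable (fun x => ‖x‖ ^ a * f x) := by
  have : Nonempty (Fin n) := ⟨⟨0, hn⟩⟩
  have hball : IntegrableOn (fun x : EuclideanSpace ℝ (Fin n) => ‖x‖ ^ a) (Metric.ball 0 1) := by
    rw [integrableOn_fun_norm_addHaar volume (f := fun r : ℝ => r ^ a)]
    -- The polar Jacobian `r ^ (n - 1)` raises the exponent to `n - 1 + a > -1`.
    have h1 : IntervalIntegrable (fun r : ℝ => r ^ ((n : ℝ) - 1 + a)) volume 0 1 :=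
      intervalIntegral.intervalIntegrable_rpow' (by linarith)
    rw [intervalIntegrable_iff_integrableOn_Ioo_of_le zero_le_one] at h1
    refine h1.congr_fun (fun r hr => ?_) measurableSet_Ioo
    have hr0 : 0 < r := hr.1
    simp only [finrank_euclideanSpace, Fintype.card_fin, smul_eq_mul]
    rw [Real.rpow_add hr0, ← Nat.cast_one, ← Nat.cast_sub hn, Real.rpow_natCast]
  obtain ⟨C, -, hC⟩ := f.decay 0 0
  obtain ⟨k, hk⟩ := exists_nat_ge a
  -- Dominate by `C ‖x‖ ^ a` on the ball plus `‖x‖ ^ k ‖f x‖` with an integer `k ≥ a`.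
  refine Integrable.mono' ((hball.integrable_indicator measurableSet_ball |>.const_mul C).add
    (f.integrable_pow_mul volume k)) ?_ ?_
  · exact (measurable_norm.pow_const a).aestronglyMeasurable.mul
      f.continuous.aestronglyMeasurable
  · refine Filter.Eventually.of_forall fun x => ?_
    have hCx : ‖f x‖ ≤ C := by simpa using hC x
    rw [norm_mul, Real.norm_of_nonneg (by positivity)]
    simp only [Pi.add_apply]
    by_cases hx : ‖x‖ < 1
    · rw [Set.indicator_of_mem (by simpa using hx)]
      have : ‖x‖ ^ a * ‖f x‖ ≤ ‖x‖ ^ a * C := by gcongr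
      have : 0 ≤ ‖x‖ ^ k * ‖f x‖ := by positivity
      linarith
    · rw [Set.indicator_of_notMem (by simpa using hx)]
      push Not at hx
      have : ‖x‖ ^ a ≤ ‖x‖ ^ k := by
        rw [← Real.rpow_natCast]
        exact Real.rpow_le_rpow_of_exponent_le hx hk
      have : ‖x‖ ^ a * ‖f x‖ ≤ ‖x‖ ^ k * ‖f x‖ := by gcongr
      linarith

/-- The regularized weight `(‖x‖² + ε)^r` is smooth of temperate growth: it is the Japanese bracket
`(1 + ‖x‖²)^r`, rescaled by `√ε`. -/
theorem hasTemperateGrowth_norm_sq_add_rpow {n : ℕ} {ε : ℝ} (hε : 0 < ε) (r : ℝ) :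
    (fun x : EuclideanSpace ℝ (Fin n) => (‖x‖ ^ 2 + ε) ^ r).HasTemperateGrowth := by
  have h1 := (Function.hasTemperateGrowth_one_add_norm_sq_rpow
    (EuclideanSpace ℝ (Fin n)) r).comp
    ((√ε)⁻¹ • ContinuousLinearMap.id ℝ (EuclideanSpace ℝ (Fin n))).hasTemperateGrowth
  have h2 := (Function.HasTemperateGrowth.const
    (E := EuclideanSpace ℝ (Fin n)) (ε ^ r)).mul h1
  suffices h : (fun x : EuclideanSpace ℝ (Fin n) => (‖x‖ ^ 2 + ε) ^ r) = _ from h ▸ h2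
  funext x
  have : ‖x‖ ^ 2 + ε = ε * (1 + ‖(√ε)⁻¹ • x‖ ^ 2) := by
    rw [norm_smul, mul_pow, norm_inv, inv_pow, Real.norm_of_nonneg (by positivity),
      Real.sq_sqrt hε.le]
    field_simp
    ring
  rw [this, Real.mul_rpow hε.le (by positivity)]
  simp

theorem hasFDerivAt_norm_sq_add_rpow {n : ℕ} {ε : ℝ} (hε : 0 < ε) (r : ℝ)
    (x : EuclideanSpace ℝ (Fin n)) :
    HasFDerivAt (fun x : EuclideanSpace ℝ (Fin n) => (‖x‖ ^ 2 + ε) ^ r)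
      ((r * (‖x‖ ^ 2 + ε) ^ (r - 1)) • ((2 : ℝ) • innerSL ℝ x)) x := by
  have h1 : HasFDerivAt (fun x : EuclideanSpace ℝ (Fin n) => ‖x‖ ^ 2 + ε)
      ((2 : ℝ) • innerSL ℝ x) x := by
    have := (hasStrictFDerivAt_norm_sq x).hasFDerivAt.add_const ε
    simpa [ofNat_smul_eq_nsmul] using this
  exact h1.rpow_const (Or.inl (by positivity))

theorem integrable_temperate_mul {n : ℕ} {c : EuclideanSpace ℝ (Fin n) → ℝ}
    (hc : c.HasTemperateGrowth) (g : 𝓢(EuclideanSpace ℝ (Fin n), ℝ)) :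
    Integrable (fun x => c x * g x) := by
  have := (SchwartzMap.smulLeftCLM ℝ c g).integrable (μ := volume)
  refine this.congr (Filter.Eventually.of_forall fun x => ?_)
  simp [SchwartzMap.smulLeftCLM_apply_apply hc]

/-- Integration by parts against a Schwartz function, for a weight `c` of temperate growth whose
derivative in direction `v` is `c'`. -/
theorem integral_temperate_mul_lineDeriv {n : ℕ} {c : EuclideanSpace ℝ (Fin n) → ℝ}
    (hc : c.HasTemperateGrowth) {c' : EuclideanSpace ℝ (Fin n) → ℝ}
    (hc' : c'.HasTemperateGrowth) (v : EuclideanSpace ℝ (Fin n))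
    (hcc' : ∀ x, fderiv ℝ c x v = c' x) (g : 𝓢(EuclideanSpace ℝ (Fin n), ℝ)) :
    ∫ x, c x * (∂_{v} g) x = - ∫ x, c' x * g x := by
  simp only [← hcc', SchwartzMap.lineDerivOp_apply_eq_fderiv]
  refine integral_mul_fderiv_eq_neg_fderiv_mul_of_integrable ?_
    (integrable_temperate_mul hc (∂_{v} g)) (integrable_temperate_mul hc g)
    (fun x _ => (hc.1.differentiable (by simp)) x) (fun x _ => g.differentiableAt)
  simp only [hcc']
  exact integrable_temperate_mul hc' g

theorem integral_regularized_mul_second_deriv {n : ℕ} {ε : ℝ} (hε : 0 < ε) (s : ℝ)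
    (g : 𝓢(EuclideanSpace ℝ (Fin n), ℝ)) (i : Fin n) :
    ∫ x, (‖x‖ ^ 2 + ε) ^ s *
        (∂_{EuclideanSpace.single i (1 : ℝ)} (∂_{EuclideanSpace.single i (1 : ℝ)} g)) x
      = ∫ x, (2 * s * (‖x‖ ^ 2 + ε) ^ (s - 1)
          + 4 * s * (s - 1) * (x i) ^ 2 * (‖x‖ ^ 2 + ε) ^ (s - 2)) * g x := by
  have hT := fun r => hasTemperateGrowth_norm_sq_add_rpow (n := n) hε r
  have hi : (fun x : EuclideanSpace ℝ (Fin n) => x i).HasTemperateGrowth :=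
    (EuclideanSpace.proj (𝕜 := ℝ) i).hasTemperateGrowth
  have hC := fun c : ℝ => Function.HasTemperateGrowth.const (E := EuclideanSpace ℝ (Fin n)) c
  have h1 : (fun x : EuclideanSpace ℝ (Fin n) =>
      2 * s * (x i * (‖x‖ ^ 2 + ε) ^ (s - 1))).HasTemperateGrowth :=
    (hC _).mul (hi.mul (hT _))
  have h2 : (fun x : EuclideanSpace ℝ (Fin n) => 2 * s * (‖x‖ ^ 2 + ε) ^ (s - 1)
          + 4 * s * (s - 1) * (x i) ^ 2 * (‖x‖ ^ 2 + ε) ^ (s - 2)).HasTemperateGrowth :=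
    ((hC _).mul (hT _)).add (((hC _).mul (hi.pow 2)).mul (hT _))
  rw [integral_temperate_mul_lineDeriv (hT s) h1, integral_temperate_mul_lineDeriv h1 h2, neg_neg]
  · intro x
    have hd := ((EuclideanSpace.proj (𝕜 := ℝ) i).hasFDerivAt (x := x)).mul
      (hasFDerivAt_norm_sq_add_rpow (n := n) hε (s - 1) x) |>.const_mul (2 * s)
    have hd' : fderiv ℝ (fun x : EuclideanSpace ℝ (Fin n) =>
      2 * s * (x i * (‖x‖ ^ 2 + ε) ^ (s - 1))) x = _ := hd.fderiv
    rw [hd']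
    have : s - 1 - 1 = s - 2 := by ring
    simp [EuclideanSpace.inner_single_right, this]
    ring
  · intro x
    rw [(hasFDerivAt_norm_sq_add_rpow (n := n) hε s x).fderiv]
    simp [EuclideanSpace.inner_single_right]
    ring

/-- Both derivatives of the Laplacian are moved onto `(‖x‖² + ε)^s`; the sum of the `(x i)²` is `‖x‖²`. -/
theorem integral_regularized_mul_laplacian {n : ℕ} {ε : ℝ} (hε : 0 < ε) (s : ℝ)
    (g : 𝓢(EuclideanSpace ℝ (Fin n), ℝ)) :
    ∑ i : Fin n, ∫ x, (‖x‖ ^ 2 + ε) ^ s *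
        (∂_{EuclideanSpace.single i (1 : ℝ)} (∂_{EuclideanSpace.single i (1 : ℝ)} g)) x
      = ∫ x, (2 * s * n * (‖x‖ ^ 2 + ε) ^ (s - 1)
          + 4 * s * (s - 1) * (‖x‖ ^ 2 * (‖x‖ ^ 2 + ε) ^ (s - 2))) * g x := by
  have hT := fun r => hasTemperateGrowth_norm_sq_add_rpow (n := n) hε r
  have hC := fun c : ℝ => Function.HasTemperateGrowth.const (E := EuclideanSpace ℝ (Fin n)) c
  simp only [integral_regularized_mul_second_deriv hε]
  rw [← integral_finsetSum]
  · congr 1 with x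
    rw [← Finset.sum_mul, Finset.sum_add_distrib, ← Finset.sum_mul _ _ ((‖x‖ ^ 2 + ε) ^ (s - 2)),
      ← Finset.mul_sum _ _ (4 * s * (s - 1)), ← EuclideanSpace.real_norm_sq_eq]
    simp only [Finset.sum_const, Finset.card_univ, Fintype.card_fin, nsmul_eq_mul]
    ring
  · intro i _
    have hi : (fun x : EuclideanSpace ℝ (Fin n) => x i).HasTemperateGrowth :=
      (EuclideanSpace.proj (𝕜 := ℝ) i).hasTemperateGrowth
    exact integrable_temperate_mul
      (((hC _).mul (hT _)).add (((hC _).mul (hi.pow 2)).mul (hT _))) g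

/-- The distributional identity `Δ ‖x‖^{2s} = 2s (n + 2s - 2) ‖x‖^{2s-2}`, tested against a Schwartz
function. It is the limit `ε → 0⁺` of the identity for the weight `(‖x‖² + ε)^s`; the condition
`n + 2s > 2` makes the dominating function integrable near the origin. -/
theorem integral_norm_rpow_mul_laplacian {n : ℕ} (hn : 1 ≤ n) {s : ℝ} (hs : 0 < s)
    (hns : 2 < (n : ℝ) + 2 * s) (g : 𝓢(EuclideanSpace ℝ (Fin n), ℝ)) :
    ∑ i : Fin n, ∫ x, ‖x‖ ^ (2 * s) *
        (∂_{EuclideanSpace.single i (1 : ℝ)} (∂_{EuclideanSpace.single i (1 : ℝ)} g)) x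
      = 2 * s * (n + 2 * s - 2) * ∫ x, ‖x‖ ^ (2 * (s - 1)) * g x := by
  have : Nonempty (Fin n) := ⟨⟨0, hn⟩⟩
  have hT := fun r => hasTemperateGrowth_norm_sq_add_rpow (n := n) one_pos r
  have hsq : ∀ (x : EuclideanSpace ℝ (Fin n)) (r : ℝ), (‖x‖ ^ 2) ^ r = ‖x‖ ^ (2 * r) := by
    intro x r
    rw [← Real.rpow_natCast, ← Real.rpow_mul (norm_nonneg _)]
    norm_num
  have hlim : Filter.Tendsto (fun ε : ℝ => ε) (nhdsWithin 0 (Set.Ioo 0 1)) (nhds 0) :=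
    tendsto_nhdsWithin_of_tendsto_nhds Filter.tendsto_id
  have hpos : ∀ᶠ ε : ℝ in nhdsWithin 0 (Set.Ioo 0 1), ε ∈ Set.Ioo (0 : ℝ) 1 :=
    self_mem_nhdsWithin
  have hne : (nhdsWithin (0 : ℝ) (Set.Ioo 0 1)).NeBot := by
    rw [← mem_closure_iff_nhdsWithin_neBot, closure_Ioo (by norm_num)]
    simp
  have hL : ∀ h : 𝓢(EuclideanSpace ℝ (Fin n), ℝ),
      Filter.Tendsto (fun ε : ℝ => ∫ x, (‖x‖ ^ 2 + ε) ^ s * h x) (nhdsWithin 0 (Set.Ioo 0 1))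
        (nhds (∫ x, ‖x‖ ^ (2 * s) * h x)) := by
    intro h
    -- Since `s > 0`, the weight at `ε ≤ 1` is dominated by the weight at `ε = 1`.
    refine tendsto_integral_filter_of_dominated_convergence
      (fun x => ‖(‖x‖ ^ 2 + 1) ^ s * h x‖) ?_ ?_ ?_ ?_
    · filter_upwards [hpos] with ε hε
      exact (integrable_temperate_mul (hasTemperateGrowth_norm_sq_add_rpow hε.1 s)
        h).aestronglyMeasurable
    · filter_upwards [hpos] with ε hε
      refine Filter.Eventually.of_forall fun x => ?_
      have := hε.1
      have := hε.2.le
      rw [norm_mul, norm_mul, Real.norm_of_nonneg (by positivity : 0 ≤ (‖x‖ ^ 2 + ε) ^ s),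
        Real.norm_of_nonneg (by positivity : 0 ≤ (‖x‖ ^ 2 + 1) ^ s)]
      gcongr
    · exact (integrable_temperate_mul (hT s) h).norm
    · refine Filter.Eventually.of_forall fun x => ?_
      refine Filter.Tendsto.mul_const _ ?_
      rw [← hsq]
      have : Filter.Tendsto (fun ε : ℝ => ‖x‖ ^ 2 + ε) (nhdsWithin 0 (Set.Ioo 0 1))
        (nhds (‖x‖ ^ 2)) := by simpa using hlim.const_add (‖x‖ ^ 2)
      exact this.rpow_const (Or.inr hs.le)
  have hR : Filter.Tendsto (fun ε : ℝ => ∫ x, (2 * s * n * (‖x‖ ^ 2 + ε) ^ (s - 1)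
          + 4 * s * (s - 1) * (‖x‖ ^ 2 * (‖x‖ ^ 2 + ε) ^ (s - 2))) * g x)
        (nhdsWithin 0 (Set.Ioo 0 1))
        (nhds (∫ x, (2 * s * (n + 2 * s - 2)) * (‖x‖ ^ (2 * (s - 1)) * g x))) := by
    refine tendsto_integral_filter_of_dominated_convergence
      (fun x => (2 * s * n + |4 * s * (s - 1)|) *
        (‖‖x‖ ^ (2 * (s - 1)) * g x‖ + ‖(‖x‖ ^ 2 + 1) ^ (s - 1) * g x‖)) ?_ ?_ ?_ ?_
    · filter_upwards [hpos] with ε hε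
      have hT' := fun r => hasTemperateGrowth_norm_sq_add_rpow (n := n) hε.1 r
      have hC := fun c : ℝ => Function.HasTemperateGrowth.const (E := EuclideanSpace ℝ (Fin n)) c
      exact (integrable_temperate_mul (((hC _).mul (hT' _)).add ((hC _).mul
        ((Function.hasTemperateGrowth_norm_sq _).mul (hT' _)))) g).aestronglyMeasurable
    · filter_upwards [hpos] with ε hε
      have h0 := hε.1
      have h1 := hε.2.le
      filter_upwards [compl_mem_ae_iff.mpr (measure_singleton 0)] with x hx
      have hx : 0 < ‖x‖ := norm_pos_iff.mpr (by simpa using hx)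
      -- `(‖x‖² + ε)^(s-1)` is monotone in `ε` for `s ≥ 1` and antitone for `s ≤ 1`,
      -- so it is bounded by the sum of its values at `ε = 1` and `ε = 0`.
      set B := ‖x‖ ^ (2 * (s - 1)) + (‖x‖ ^ 2 + 1) ^ (s - 1) with hB
      have hb1 : (‖x‖ ^ 2 + ε) ^ (s - 1) ≤ B := by
        rcases le_total 1 s with h | h
        · have : (‖x‖ ^ 2 + ε) ^ (s - 1) ≤ (‖x‖ ^ 2 + 1) ^ (s - 1) :=
            Real.rpow_le_rpow (by positivity) (by linarith) (by linarith)
          have : 0 ≤ ‖x‖ ^ (2 * (s - 1)) := by positivity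
          linarith
        · have : (‖x‖ ^ 2 + ε) ^ (s - 1) ≤ (‖x‖ ^ 2) ^ (s - 1) :=
            Real.rpow_le_rpow_of_nonpos (by positivity) (by linarith) (by linarith)
          rw [hsq] at this
          have : 0 ≤ (‖x‖ ^ 2 + 1) ^ (s - 1) := by positivity
          linarith
      have hb2 : ‖x‖ ^ 2 * (‖x‖ ^ 2 + ε) ^ (s - 2) ≤ (‖x‖ ^ 2 + ε) ^ (s - 1) := by
        have : (‖x‖ ^ 2 + ε) ^ (s - 1) = (‖x‖ ^ 2 + ε) * (‖x‖ ^ 2 + ε) ^ (s - 2) := by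
          rw [← rpow_one_add_of_pos (by positivity)]
          ring_nf
        rw [this]
        gcongr
        linarith
      have hb : |2 * s * n * (‖x‖ ^ 2 + ε) ^ (s - 1)
          + 4 * s * (s - 1) * (‖x‖ ^ 2 * (‖x‖ ^ 2 + ε) ^ (s - 2))| ≤
          (2 * s * n + |4 * s * (s - 1)|) * B := by
        refine (abs_add_le _ _).trans ?_
        rw [abs_mul (4 * s * (s - 1)), abs_of_nonneg (by positivity),
          abs_of_nonneg (a := ‖x‖ ^ 2 * (‖x‖ ^ 2 + ε) ^ (s - 2)) (by positivity), add_mul]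
        gcongr
        exact hb2.trans hb1
      simp only [norm_mul, Real.norm_eq_abs]
      rw [abs_of_nonneg (a := ‖x‖ ^ (2 * (s - 1))) (by positivity),
        abs_of_nonneg (a := (‖x‖ ^ 2 + 1) ^ (s - 1)) (by positivity), ← add_mul,
        ← mul_assoc (2 * s * n + |4 * s * (s - 1)|)]
      exact mul_le_mul_of_nonneg_right hb (abs_nonneg _)
    · exact ((integrable_norm_rpow_mul_schwartz hn (by linarith) g).norm.add
        (integrable_temperate_mul (hT _) g).norm).const_mul _
    · filter_upwards [compl_mem_ae_iff.mpr (measure_singleton 0)] with x hx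
      have hx : 0 < ‖x‖ := norm_pos_iff.mpr (by simpa using hx)
      have h1 : ∀ r : ℝ, Filter.Tendsto (fun ε : ℝ => (‖x‖ ^ 2 + ε) ^ r)
          (nhdsWithin 0 (Set.Ioo 0 1)) (nhds ((‖x‖ ^ 2) ^ r)) := by
        intro r
        have : Filter.Tendsto (fun ε : ℝ => ‖x‖ ^ 2 + ε) (nhdsWithin 0 (Set.Ioo 0 1))
          (nhds (‖x‖ ^ 2)) := by simpa using hlim.const_add (‖x‖ ^ 2)
        exact this.rpow_const (Or.inl (by positivity))
      have h2 := (((h1 (s - 1)).const_mul (2 * s * n)).add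
        (((h1 (s - 2)).const_mul (‖x‖ ^ 2)).const_mul (4 * s * (s - 1)))).mul_const (g x)
      convert h2 using 2
      have : (‖x‖ ^ 2) ^ (s - 1) = ‖x‖ ^ 2 * (‖x‖ ^ 2) ^ (s - 2) := by
        rw [← rpow_one_add_of_pos (by positivity)]
        ring_nf
      rw [← this, ← hsq]
      ring
  rw [← integral_const_mul]
  refine tendsto_nhds_unique (tendsto_finsetSum Finset.univ fun i _ => hL _) (hR.congr' ?_)
  filter_upwards [hpos] with ε hε
  exact (integral_regularized_mul_laplacian hε.1 s g).symm

/-! ### Unitary and Mathlib Fourier transforms -/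

/-- Comparison with Mathlib's Fourier transform, which has `2π` in the exponent. -/
theorem fourierT_eq {n : ℕ} (f : EuclideanSpace ℝ (Fin n) → ℂ) (y : EuclideanSpace ℝ (Fin n)) :
    fourierT n f y
      = (((2 * Real.pi) ^ (-(n : ℝ) / 2) : ℝ) : ℂ) * 𝓕 f ((2 * Real.pi)⁻¹ • y) := by
  rw [fourierT, Real.fourier_eq']
  congr 2 with x
  rw [smul_eq_mul]
  congr 2
  rw [inner_smul_right]
  push_cast
  have : (Real.pi : ℂ) ≠ 0 := by exact_mod_cast Real.pi_ne_zero
  field_simp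

/-- The normalization `(2π)^{-n/2}`, occurring twice, cancels the Jacobian of `y = 2π ξ`. -/
theorem two_pi_rpow_sq (n : ℕ) :
    ((2 * Real.pi) ^ (-(n : ℝ) / 2)) * ((2 * Real.pi) ^ (-(n : ℝ) / 2)) * (2 * Real.pi) ^ n
      = 1 := by
  have hpi : 0 < 2 * Real.pi := by positivity
  rw [← Real.rpow_natCast, ← Real.rpow_add hpi, ← Real.rpow_add hpi]
  ring_nf
  simp

/-- The change of variables `y = 2π ξ`. -/
theorem integral_eq_two_pi_pow_smul_of_comp {n : ℕ} {F : Type*} [NormedAddCommGroup F] [NormedSpace ℝ F]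
    {ψ φ : EuclideanSpace ℝ (Fin n) → F} (h : ∀ y, ψ y = φ ((2 * Real.pi)⁻¹ • y)) :
    ∫ y, ψ y = ((2 * Real.pi) ^ n) • ∫ ξ, φ ξ := by
  rw [integral_congr_ae (.of_forall h), Measure.integral_comp_inv_smul_of_nonneg volume φ (by positivity)]
  simp

theorem invFourierT_multiplier {n : ℕ} (s : ℝ) (f : EuclideanSpace ℝ (Fin n) → ℂ)
    (x : EuclideanSpace ℝ (Fin n)) :
    invFourierT n (fun y => ((‖y‖ ^ (2 * s) : ℝ) : ℂ) * fourierT n f y) x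
      = (((2 * Real.pi) ^ (2 * s) : ℝ) : ℂ) *
        𝓕⁻ (fun ξ => ((‖ξ‖ ^ (2 * s) : ℝ) : ℂ) * 𝓕 f ξ) x := by
  have hpi : 0 < 2 * Real.pi := by positivity
  rw [invFourierT, Real.fourierInv_eq']
  set c : ℝ := (2 * Real.pi) ^ (-(n : ℝ) / 2) with hc
  obtain ⟨φ, hφ⟩ : ∃ φ : EuclideanSpace ℝ (Fin n) → ℂ, φ = fun ξ =>
      ((c * (2 * Real.pi) ^ (2 * s) : ℝ) : ℂ) *
        (Complex.exp (((2 * Real.pi * ⟪ξ, x⟫ : ℝ) : ℂ) * Complex.I) •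
          (((‖ξ‖ ^ (2 * s) : ℝ) : ℂ) * 𝓕 f ξ)) := ⟨_, rfl⟩
  have key : ∀ y : EuclideanSpace ℝ (Fin n),
      Complex.exp (Complex.I * ((⟪x, y⟫ : ℝ) : ℂ)) *
        (((‖y‖ ^ (2 * s) : ℝ) : ℂ) * fourierT n f y)
      = φ ((2 * Real.pi)⁻¹ • y) := by
    intro y
    simp only [hφ]
    have h1 : ‖y‖ ^ (2 * s)
        = (2 * Real.pi) ^ (2 * s) * ‖(2 * Real.pi)⁻¹ • y‖ ^ (2 * s) := by
      rw [← Real.mul_rpow hpi.le (norm_nonneg _), norm_smul, norm_inv, Real.norm_of_nonneg hpi.le,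
        mul_inv_cancel_left₀ hpi.ne']
    have h2 : ⟪x, y⟫ = 2 * Real.pi * ⟪(2 * Real.pi)⁻¹ • y, x⟫ := by
      rw [real_inner_smul_left, mul_inv_cancel_left₀ hpi.ne', real_inner_comm]
    rw [fourierT_eq, ← hc, h1, h2]
    simp only [smul_eq_mul]
    push_cast
    ring_nf
  rw [integral_eq_two_pi_pow_smul_of_comp key, hφ, integral_const_mul, Complex.real_smul]
  have := two_pi_rpow_sq n
  rw [← hc] at this
  have h3 : (c : ℂ) * c * ((((2 * Real.pi) ^ n : ℝ)) : ℂ) = 1 := by exact_mod_cast this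
  rw [Complex.ofReal_mul]
  linear_combination ((((2 * Real.pi) ^ (2 * s) : ℝ) : ℂ) * ∫ ξ : EuclideanSpace ℝ (Fin n), Complex.exp (((2 * Real.pi * ⟪ξ, x⟫ : ℝ) : ℂ) * Complex.I) •
            (((‖ξ‖ ^ (2 * s) : ℝ) : ℂ) * 𝓕 f ξ)) * h3

theorem integral_norm_rpow_mul_fourierT {n : ℕ} (a : ℝ) (f : EuclideanSpace ℝ (Fin n) → ℂ) :
    ∫ y, ‖y‖ ^ a * ‖fourierT n f y‖ ^ 2 = (2 * Real.pi) ^ a * ∫ ξ, ‖ξ‖ ^ a * ‖𝓕 f ξ‖ ^ 2 := by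
  have hpi : 0 < 2 * Real.pi := by positivity
  set c : ℝ := (2 * Real.pi) ^ (-(n : ℝ) / 2) with hc
  obtain ⟨φ, hφ⟩ : ∃ φ : EuclideanSpace ℝ (Fin n) → ℝ, φ = fun ξ =>
      (c * c * (2 * Real.pi) ^ a) * (‖ξ‖ ^ a * ‖𝓕 f ξ‖ ^ 2) := ⟨_, rfl⟩
  have key : ∀ y : EuclideanSpace ℝ (Fin n), ‖y‖ ^ a * ‖fourierT n f y‖ ^ 2
      = φ ((2 * Real.pi)⁻¹ • y) := by
    intro y
    simp only [hφ]
    have h1 : ‖y‖ ^ a = (2 * Real.pi) ^ a * ‖(2 * Real.pi)⁻¹ • y‖ ^ a := by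
      rw [← Real.mul_rpow hpi.le (norm_nonneg _), norm_smul, norm_inv, Real.norm_of_nonneg hpi.le,
        mul_inv_cancel_left₀ hpi.ne']
    rw [fourierT_eq, h1, norm_mul, Complex.norm_real, ← hc,
      Real.norm_of_nonneg (by positivity : 0 ≤ c)]
    ring
  rw [integral_eq_two_pi_pow_smul_of_comp key, hφ, integral_const_mul, smul_eq_mul]
  have := two_pi_rpow_sq n
  rw [← hc] at this
  linear_combination ((2 * Real.pi) ^ a * ∫ ξ, ‖ξ‖ ^ a * ‖𝓕 f ξ‖ ^ 2) * this

/-! ### Pairings with the fractional Laplacian on the Fourier side -/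

/-- The inverse Fourier transform may be moved from one factor to the other (Fubini). -/
theorem integral_fourierInv_mul {n : ℕ} {a h : EuclideanSpace ℝ (Fin n) → ℂ}
    (ha : Integrable a) (hh : Integrable h) :
    ∫ x, 𝓕⁻ a x * h x = ∫ ξ, a ξ * 𝓕⁻ h ξ := by
  have := VectorFourier.integral_fourierIntegral_smul_eq_flip (μ := volume) (ν := volume)
    (L := -innerₗ (EuclideanSpace ℝ (Fin n))) (f := a) (g := h)
    Real.continuous_fourierChar (by simpa using! continuous_inner.neg) ha hh
  have hf : (-innerₗ (EuclideanSpace ℝ (Fin n))).flip = -innerₗ (EuclideanSpace ℝ (Fin n)) := by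
    ext x y
    simp [real_inner_comm]
  rw [hf] at this
  exact this

theorem fourierInv_ofReal {n : ℕ} (h : EuclideanSpace ℝ (Fin n) → ℝ)
    (ξ : EuclideanSpace ℝ (Fin n)) :
    𝓕⁻ (fun x => (h x : ℂ)) ξ = (starRingEnd ℂ) (𝓕 (fun x => (h x : ℂ)) ξ) := by
  rw [Real.fourierInv_eq', Real.fourier_eq', ← integral_conj]
  congr 1 with x
  simp only [smul_eq_mul, map_mul, Complex.conj_ofReal, ← Complex.exp_conj, Complex.conj_I]
  push_cast
  ring_nf

/-- A real smooth compactly supported function, viewed as a complex Schwartz function. -/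
noncomputable def complexSchwartz {n : ℕ} (f : EuclideanSpace ℝ (Fin n) → ℝ)
    (hf : ContDiff ℝ ∞ f) (hfc : HasCompactSupport f) : 𝓢(EuclideanSpace ℝ (Fin n), ℂ) :=
  (hfc.comp_left (g := Complex.ofReal) Complex.ofReal_zero).toSchwartzMap
    (Complex.ofRealCLM.contDiff.comp hf)

theorem complexSchwartz_coe {n : ℕ} (f : EuclideanSpace ℝ (Fin n) → ℝ)
    (hf : ContDiff ℝ ∞ f) (hfc : HasCompactSupport f) :
    (complexSchwartz f hf hfc : EuclideanSpace ℝ (Fin n) → ℂ) = fun x => (f x : ℂ) := rfl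

theorem fourier_complexSchwartz_coe {n : ℕ} (f : EuclideanSpace ℝ (Fin n) → ℝ)
    (hf : ContDiff ℝ ∞ f) (hfc : HasCompactSupport f) :
    𝓕 (fun x => (f x : ℂ)) = (𝓕 (complexSchwartz f hf hfc) : 𝓢(EuclideanSpace ℝ (Fin n), ℂ)) := rfl

/-- Real and imaginary parts reduce this to `integrable_norm_rpow_mul_schwartz`. -/
theorem integrable_multiplier {n : ℕ} (hn : 1 ≤ n) {s : ℝ} (hs : 0 < s)
    (G : 𝓢(EuclideanSpace ℝ (Fin n), ℂ)) :
    Integrable (fun ξ => ((‖ξ‖ ^ (2 * s) : ℝ) : ℂ) * G ξ) := by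
  have hc : ∀ L : ℂ →L[ℝ] ℝ, Integrable (fun ξ => ‖ξ‖ ^ (2 * s) * L (G ξ)) := fun L =>
    integrable_norm_rpow_mul_schwartz hn
      (by have : (0 : ℝ) ≤ n := n.cast_nonneg
          linarith) (SchwartzMap.postcompCLM L G)
  have := (hc Complex.reCLM).ofReal (𝕜 := ℂ) |>.add
    (((hc Complex.imCLM).ofReal (𝕜 := ℂ)).const_mul Complex.I)
  refine this.congr (Filter.Eventually.of_forall fun ξ => ?_)
  simp only [Pi.add_apply, Complex.reCLM_apply, Complex.imCLM_apply]
  apply Complex.ext <;> simp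

theorem fracLap_eq {n : ℕ} (s : ℝ) (Ω : Set (EuclideanSpace ℝ (Fin n)))
    {f : EuclideanSpace ℝ (Fin n) → ℝ} (hfΩ : Function.support f ⊆ Ω)
    (x : EuclideanSpace ℝ (Fin n)) :
    fracLap s Ω f x = (2 * Real.pi) ^ (2 * s) *
      (𝓕⁻ (fun ξ => ((‖ξ‖ ^ (2 * s) : ℝ) : ℂ) * 𝓕 (fun z => (f z : ℂ)) ξ) x).re := by
  rw [fracLap, Set.indicator_eq_self.mpr hfΩ, invFourierT_multiplier, Complex.re_ofReal_mul]

theorem continuous_fracLap {n : ℕ} (hn : 1 ≤ n) {s : ℝ} (hs : 0 < s)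
    {Ω : Set (EuclideanSpace ℝ (Fin n))} {f : EuclideanSpace ℝ (Fin n) → ℝ}
    (hf : ContDiff ℝ ∞ f) (hfc : HasCompactSupport f) (hfΩ : Function.support f ⊆ Ω) :
    Continuous (fracLap s Ω f) := by
  rw [funext (fracLap_eq s Ω hfΩ), fourier_complexSchwartz_coe f hf hfc]
  refine continuous_const.mul (Complex.continuous_re.comp ?_)
  exact VectorFourier.fourierIntegral_continuous (L := -innerₗ (EuclideanSpace ℝ (Fin n)))
    Real.continuous_fourierChar (by simpa using! continuous_inner.neg)
    (integrable_multiplier hn hs _)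

/-- Plancherel: the pairing of `(-Δ)^s f` with `h` on the Fourier side. The factor `(2π)^{2s}` comes
from Mathlib's normalization of the Fourier transform. -/
theorem integral_fracLap_mul {n : ℕ} (hn : 1 ≤ n) {s : ℝ} (hs : 0 < s)
    {Ω : Set (EuclideanSpace ℝ (Fin n))} {f h : EuclideanSpace ℝ (Fin n) → ℝ}
    (hf : ContDiff ℝ ∞ f) (hfc : HasCompactSupport f) (hfΩ : Function.support f ⊆ Ω)
    (hh : ContDiff ℝ ∞ h) (hhc : HasCompactSupport h) :
    ∫ x, fracLap s Ω f x * h x = (2 * Real.pi) ^ (2 * s) *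
      ∫ ξ, ‖ξ‖ ^ (2 * s) * ⟪(𝓕 (complexSchwartz h hh hhc)) ξ, (𝓕 (complexSchwartz f hf hfc)) ξ⟫ := by
  have hI := integrable_multiplier hn hs (𝓕 (complexSchwartz f hf hfc))
  have hhI : Integrable (fun x => (h x : ℂ)) := (complexSchwartz h hh hhc).integrable
  have h1 := congrArg Complex.re (integral_fourierInv_mul hI hhI)
  have hint1 : Integrable (fun x => (𝓕⁻ (fun ξ => ((‖ξ‖ ^ (2 * s) : ℝ) : ℂ) *
      (𝓕 (complexSchwartz f hf hfc)) ξ) : EuclideanSpace ℝ (Fin n) → ℂ) x * (h x : ℂ)) := by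
    refine Continuous.integrable_of_hasCompactSupport (Continuous.mul ?_
      (complexSchwartz h hh hhc).continuous) ?_
    · exact VectorFourier.fourierIntegral_continuous (L := -innerₗ (EuclideanSpace ℝ (Fin n)))
        Real.continuous_fourierChar (by simpa using! continuous_inner.neg) hI
    · exact (hhc.comp_left (g := Complex.ofReal) Complex.ofReal_zero).mul_left
  have hint2 : Integrable (fun ξ => ((‖ξ‖ ^ (2 * s) : ℝ) : ℂ) *
      (𝓕 (complexSchwartz f hf hfc)) ξ *
        (starRingEnd ℂ) ((𝓕 (complexSchwartz h hh hhc)) ξ)) := by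
    obtain ⟨C, -, hC⟩ := (𝓕 (complexSchwartz h hh hhc)).decay 0 0
    refine hI.mul_bdd (c := C) ?_ (Filter.Eventually.of_forall fun ξ => ?_)
    · exact (Complex.continuous_conj.comp
        (𝓕 (complexSchwartz h hh hhc)).continuous).aestronglyMeasurable
    · simpa using hC ξ
  simp only [fourierInv_ofReal, fourier_complexSchwartz_coe h hh hhc] at h1
  rw [← Complex.reCLM_apply, ← Complex.reCLM_apply, ← Complex.reCLM.integral_comp_comm hint1,
    ← Complex.reCLM.integral_comp_comm hint2] at h1
  simp only [fracLap_eq s Ω hfΩ, fourier_complexSchwartz_coe f hf hfc, mul_assoc]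
  rw [integral_const_mul]
  congr 1
  simp only [Complex.reCLM_apply, Complex.re_mul_ofReal] at h1
  rw [h1]
  congr 1 with ξ
  simp [Complex.inner]
  ring


/-! ### The contribution of one coordinate -/

/-- Multiplication by a coordinate becomes `(i / 2π) ∂_i` on the Fourier side. -/
theorem fourier_coord_mul {n : ℕ} (f : EuclideanSpace ℝ (Fin n) → ℝ) (hf : ContDiff ℝ ∞ f)
    (hfc : HasCompactSupport f) (i : Fin n)
    (hf' : ContDiff ℝ ∞ (fun z => z i * f z)) (hfc' : HasCompactSupport (fun z => z i * f z))
    (ξ : EuclideanSpace ℝ (Fin n)) :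
    (𝓕 (complexSchwartz (fun z => z i * f z) hf' hfc')) ξ
      = (Complex.I / (2 * Real.pi)) *
        (∂_{EuclideanSpace.single i (1 : ℝ)} (𝓕 (complexSchwartz f hf hfc))) ξ := by
  have hpi : (Real.pi : ℂ) ≠ 0 := by exact_mod_cast Real.pi_ne_zero
  have hm : (fun x : EuclideanSpace ℝ (Fin n) =>
      inner ℝ x (EuclideanSpace.single i (1 : ℝ))).HasTemperateGrowth := by fun_prop
  have h1 : complexSchwartz (fun z => z i * f z) hf' hfc'
      = SchwartzMap.smulLeftCLM ℂ (inner ℝ · (EuclideanSpace.single i (1 : ℝ)))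
        (complexSchwartz f hf hfc) := by
    ext x
    rw [SchwartzMap.smulLeftCLM_apply_apply hm]
    simp [complexSchwartz_coe, EuclideanSpace.inner_single_right]
  rw [SchwartzMap.lineDerivOp_fourier_eq, ← h1, FourierTransform.fourier_smul,
    _root_.smul_apply, smul_eq_mul]
  field_simp
  simp

/-- Second derivative of `‖G‖²`, the Schwartz function `SchwartzMap.pairing (innerSL ℝ) G G`, for
complex-valued `G`. -/
theorem second_lineDeriv_normSq {n : ℕ} (G : 𝓢(EuclideanSpace ℝ (Fin n), ℂ))
    (v x : EuclideanSpace ℝ (Fin n)) :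
    (∂_{v} (∂_{v} (SchwartzMap.pairing (innerSL ℝ) G G))) x
      = 2 * (⟪(∂_{v} G) x, (∂_{v} G) x⟫ + ⟪G x, (∂_{v} (∂_{v} G)) x⟫) := by
  have h1 : ∀ (A B : 𝓢(EuclideanSpace ℝ (Fin n), ℂ)),
      ∂_{v} (SchwartzMap.pairing (innerSL ℝ) A B)
        = SchwartzMap.pairing (innerSL ℝ) (∂_{v} A) B
          + SchwartzMap.pairing (innerSL ℝ) A (∂_{v} B) := by
    intro A B
    ext y
    rw [SchwartzMap.lineDerivOp_apply_eq_fderiv]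
    have : HasFDerivAt (SchwartzMap.pairing (innerSL ℝ) A B) _ y :=
      (A.hasFDerivAt y).inner ℝ (B.hasFDerivAt y)
    rw [this.fderiv]
    simp only [ContinuousLinearMap.comp_apply, ContinuousLinearMap.prod_apply,
      fderivInnerCLM_apply, _root_.add_apply, SchwartzMap.pairing_apply_apply,
      SchwartzMap.lineDerivOp_apply_eq_fderiv]
    exact add_comm _ _
  rw [h1, LineDeriv.lineDerivOp_add, h1, h1]
  have hsymm : ⟪(∂_{v} (∂_{v} G)) x, G x⟫ = ⟪G x, (∂_{v} (∂_{v} G)) x⟫ := real_inner_comm _ _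
  change ⟪(∂_{v} (∂_{v} G)) x, G x⟫ + ⟪(∂_{v} G) x, (∂_{v} G) x⟫
    + (⟪(∂_{v} G) x, (∂_{v} G) x⟫ + ⟪G x, (∂_{v} (∂_{v} G)) x⟫) = _
  rw [hsymm]
  ring

/-- The `i`-th summand. On the Fourier side the three terms combine, by the Leibniz rule, into the second
derivative `∂_i ∂_i` of `‖𝓕 u‖²`. -/
theorem integral_theta2_coordinate {n : ℕ} (hn : 1 ≤ n) {s : ℝ} (hs : 0 < s)
    {Ω : Set (EuclideanSpace ℝ (Fin n))} {u : EuclideanSpace ℝ (Fin n) → ℝ}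
    (hu : ContDiff ℝ ∞ u) (huc : HasCompactSupport u) (huΩ : tsupport u ⊆ Ω) (i : Fin n) :
    ∫ x in Ω, (1 / 2) * (2 * x i * fracLap s Ω (fun z => z i * u z) x
          - (x i) ^ 2 * fracLap s Ω u x
          - fracLap s Ω (fun z => (z i) ^ 2 * u z) x) * u x
      = (2 * Real.pi) ^ (2 * (s - 1)) * (1 / 2 * ∫ ξ, ‖ξ‖ ^ (2 * s) *
        (∂_{EuclideanSpace.single i (1 : ℝ)} (∂_{EuclideanSpace.single i (1 : ℝ)}
          (SchwartzMap.pairing (innerSL ℝ) (𝓕 (complexSchwartz u hu huc))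
            (𝓕 (complexSchwartz u hu huc))))) ξ) := by
  have hpi : (0 : ℝ) < 2 * Real.pi := by positivity
  have hsupp : Function.support u ⊆ Ω := (subset_tsupport u).trans huΩ
  have hcoord : ContDiff ℝ ∞ (fun z : EuclideanSpace ℝ (Fin n) => z i) :=
    (EuclideanSpace.proj (𝕜 := ℝ) i).contDiff
  have hu1 : ContDiff ℝ ∞ (fun z => z i * u z) := hcoord.mul hu
  have hu2' : ContDiff ℝ ∞ (fun z => z i * (z i * u z)) := hcoord.mul hu1
  have huc1 : HasCompactSupport (fun z => z i * u z) := huc.mul_left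
  have huc2' : HasCompactSupport (fun z => z i * (z i * u z)) := huc1.mul_left
  have he : (fun z : EuclideanSpace ℝ (Fin n) => (z i) ^ 2 * u z) = fun z => z i * (z i * u z) := by
    funext z
    ring
  have hs1 : Function.support (fun z => z i * u z) ⊆ Ω :=
    (Function.support_mul_subset_right _ _).trans hsupp
  have hs2 : Function.support (fun z => z i * (z i * u z)) ⊆ Ω :=
    (Function.support_mul_subset_right _ _).trans hs1
  rw [he]
  have hint : ∀ {f h : EuclideanSpace ℝ (Fin n) → ℝ} (_ : ContDiff ℝ ∞ f)
      (_ : HasCompactSupport f) (_ : Function.support f ⊆ Ω) (_ : ContDiff ℝ ∞ h)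
      (_ : HasCompactSupport h), Integrable (fun x => fracLap s Ω f x * h x) :=
    fun hf hfc hfΩ hh hhc => Continuous.integrable_of_hasCompactSupport
      ((continuous_fracLap hn hs hf hfc hfΩ).mul hh.continuous) hhc.mul_left
  -- The factor `u` vanishes off `Ω`, so the integral may be taken over the whole space.
  rw [setIntegral_eq_integral_of_forall_compl_eq_zero]
  swap
  · intro x hx
    rw [Function.notMem_support.mp fun h => hx (hsupp h), mul_zero]
  -- Regroup so that each power of `x i` outside `fracLap` joins the test function `u`.
  have hsplit : ∀ x : EuclideanSpace ℝ (Fin n),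
      (1 / 2) * (2 * x i * fracLap s Ω (fun z => z i * u z) x
          - (x i) ^ 2 * fracLap s Ω u x
          - fracLap s Ω (fun z => z i * (z i * u z)) x) * u x
      = fracLap s Ω (fun z => z i * u z) x * (x i * u x)
        - 1 / 2 * (fracLap s Ω u x * (x i * (x i * u x)))
        - 1 / 2 * (fracLap s Ω (fun z => z i * (z i * u z)) x * u x) := by
    intro x
    ring
  simp_rw [hsplit]
  rw [integral_sub, integral_sub, integral_const_mul, integral_const_mul,
    integral_fracLap_mul hn hs hu1 huc1 hs1 hu1 huc1,
    integral_fracLap_mul hn hs hu huc hsupp hu2' huc2',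
    integral_fracLap_mul hn hs hu2' huc2' hs2 hu huc]
  rotate_left
  · exact hint hu1 huc1 hs1 hu1 huc1
  · exact (hint hu huc hsupp hu2' huc2').const_mul _
  · exact (hint hu1 huc1 hs1 hu1 huc1).sub ((hint hu huc hsupp hu2' huc2').const_mul _)
  · exact (hint hu2' huc2' hs2 hu huc).const_mul _
  set G := 𝓕 (complexSchwartz u hu huc) with hG
  set v : EuclideanSpace ℝ (Fin n) := EuclideanSpace.single i (1 : ℝ) with hv
  have hF1 : ∀ ξ, (𝓕 (complexSchwartz _ hu1 huc1)) ξ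
      = (Complex.I / (2 * Real.pi)) * (∂_{v} G) ξ := fourier_coord_mul u hu huc i hu1 huc1
  have hF1' : 𝓕 (complexSchwartz _ hu1 huc1) = (Complex.I / (2 * Real.pi)) • ∂_{v} G := by
    ext ξ
    simp [hF1]
  have hF2 : ∀ ξ, (𝓕 (complexSchwartz _ hu2' huc2')) ξ
      = ((-(1 / (2 * Real.pi) ^ 2) : ℝ) : ℂ) * (∂_{v} (∂_{v} G)) ξ := by
    intro ξ
    rw [fourier_coord_mul (fun z => z i * u z) hu1 huc1 i hu2' huc2' ξ, hF1',
      LineDeriv.lineDerivOp_smul, _root_.smul_apply, smul_eq_mul]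
    have hpi' : (Real.pi : ℂ) ≠ 0 := by exact_mod_cast Real.pi_ne_zero
    push_cast
    field_simp
    simp
    rfl
  simp only [hF1, hF2]
  have e1 : ∀ z : ℂ, ⟪Complex.I / (2 * Real.pi) * z, Complex.I / (2 * Real.pi) * z⟫
      = 1 / (2 * Real.pi) ^ 2 * ⟪z, z⟫ := by
    intro z
    rw [real_inner_self_eq_norm_sq, real_inner_self_eq_norm_sq, norm_mul, norm_div, Complex.norm_I,
      norm_mul, Complex.norm_real, Real.norm_of_nonneg Real.pi_pos.le]
    simp
    ring
  have e2 : ∀ (r : ℝ) (z w : ℂ), ⟪(r : ℂ) * z, w⟫ = r * ⟪w, z⟫ := by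
    intro r z w
    rw [← Complex.real_smul, real_inner_smul_left, real_inner_comm]
  have e3 : ∀ (r : ℝ) (z w : ℂ), ⟪w, (r : ℂ) * z⟫ = r * ⟪w, z⟫ := by
    intro r z w
    rw [← Complex.real_smul, real_inner_smul_right]
  simp only [e1, e2, e3, second_lineDeriv_normSq, mul_left_comm (_ : ℝ) (1 / (2 * Real.pi) ^ 2 : ℝ),
    mul_left_comm (_ : ℝ) (-(1 / (2 * Real.pi) ^ 2) : ℝ), integral_const_mul]
  have hna : -(n : ℝ) < 2 * s := by
    have : (0 : ℝ) ≤ n := n.cast_nonneg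
    linarith
  have hA : Integrable (fun ξ => ‖ξ‖ ^ (2 * s) * ⟪(∂_{v} G) ξ, (∂_{v} G) ξ⟫) :=
    integrable_norm_rpow_mul_schwartz hn hna
      (SchwartzMap.pairing (innerSL ℝ) (∂_{v} G) (∂_{v} G))
  have hB : Integrable (fun ξ => ‖ξ‖ ^ (2 * s) * ⟪G ξ, (∂_{v} (∂_{v} G)) ξ⟫) :=
    integrable_norm_rpow_mul_schwartz hn hna
      (SchwartzMap.pairing (innerSL ℝ) G (∂_{v} (∂_{v} G)))
  simp only [mul_left_comm (_ : ℝ) (2 : ℝ), mul_add]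
  rw [integral_add (hA.const_mul 2) (hB.const_mul 2), integral_const_mul, integral_const_mul]
  have hpow : (2 * Real.pi) ^ (2 * (s - 1)) = (2 * Real.pi) ^ (2 * s) * (1 / (2 * Real.pi) ^ 2) := by
    rw [mul_sub, Real.rpow_sub hpi, mul_one, Real.rpow_two]
    ring
  rw [hpow]
  ring

/-! ### Summation over the coordinates -/

/-- The main computation (3.13) of the paper:
`Σ_i ∫_Ω Θ₂(x_i) u dx = s(n+2s−2) ∫_{ℝⁿ} |y|^{2(s−1)} |F[u](y)|² dy`. -/
theorem sum_theta2_coordinates_eq {n : ℕ} (hn : 1 ≤ n) (s : ℝ) (hs : 0 < s)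
    (hns : 2 < (n : ℝ) + 2 * s)
    (Ω : Set (EuclideanSpace ℝ (Fin n))) (hΩo : IsOpen Ω) (hΩb : Bornology.IsBounded Ω)
    (u : EuclideanSpace ℝ (Fin n) → ℝ)
    (hus : ContDiff ℝ (⊤ : ℕ∞) u) (huc : HasCompactSupport u) (huΩ : tsupport u ⊆ Ω) :
    ∑ i : Fin n, ∫ x in Ω,
        (1 / 2) * (2 * x i * fracLap s Ω (fun z => z i * u z) x
          - (x i) ^ 2 * fracLap s Ω u x
          - fracLap s Ω (fun z => (z i) ^ 2 * u z) x) * u x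
      = s * ((n : ℝ) + 2 * s - 2) *
        ∫ y : EuclideanSpace ℝ (Fin n),
          ‖y‖ ^ (2 * (s - 1)) * ‖fourierT n (fun z => ((u z : ℝ) : ℂ)) y‖ ^ 2 := by
  have hg : ∀ ξ, SchwartzMap.pairing (innerSL ℝ) (𝓕 (complexSchwartz u hus huc))
      (𝓕 (complexSchwartz u hus huc)) ξ = ‖(𝓕 (complexSchwartz u hus huc)) ξ‖ ^ 2 :=
    fun ξ => real_inner_self_eq_norm_sq ((𝓕 (complexSchwartz u hus huc)) ξ)
  simp_rw [integral_theta2_coordinate hn hs hus huc huΩ]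
  rw [← Finset.mul_sum, ← Finset.mul_sum, integral_norm_rpow_mul_laplacian hn hs hns,
    integral_norm_rpow_mul_fourierT, fourier_complexSchwartz_coe u hus huc]
  simp only [hg]
  ring
end

section
/- Let V be a real inner product space and T : V → V a linear map that is symmetric (⟨Tv, w⟩ = ⟨v, Tw⟩ for all v, w ∈ V) and nonnegative (⟨Tv, v⟩ ≥ 0 for all v ∈ V). Then for all integers 0 ≤ r ≤ q with q ≥ 1 and every u ∈ V, ⟨T^r u, u⟩ ≤ ⟨T^q u, u⟩^{r/q} · ⟨u, u⟩^{1 − r/q}. -/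
/-!
The moments `a k = ⟪T ^ k u, u⟫` form a nonnegative log-convex sequence. Every power `T ^ n` is
again nonnegative, because `⟪T ^ (n + 2) v, v⟫ = ⟪T ^ n (T v), T v⟫`
(`inner_pow_apply_self_nonneg`). Hence the quadratic polynomial
`t ↦ ⟪T ^ n (u + t T u), u + t T u⟫ = a n + 2 t a (n + 1) + t² a (n + 2)` is nonnegative, and its
discriminant gives `a (n + 1) ^ 2 ≤ a n * a (n + 2)` (`inner_pow_apply_sq_le`).

For any nonnegative sequence this log-convexity yields
`a r ^ q ≤ a q ^ r * a 0 ^ (q - r)` (`logConvex_pow_le`), whose `q`-th root is the theorem.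
Working with natural powers until the very end avoids logarithms, so vanishing moments need no
separate treatment beyond one cancellation.
-/

open scoped RealInnerProductSpace

lemma inner_pow_apply_self_nonneg {V : Type*} [NormedAddCommGroup V] [InnerProductSpace ℝ V]
    (T : V →ₗ[ℝ] V) (hsymm : ∀ v w : V, ⟪T v, w⟫ = ⟪v, T w⟫) (hnonneg : ∀ v : V, 0 ≤ ⟪T v, v⟫) :
    ∀ (n : ℕ) (v : V), 0 ≤ ⟪(T ^ n) v, v⟫
  | 0, v => by simp
  | 1, v => by simpa using hnonneg v
  | n + 2, v => by
    have h := inner_pow_apply_self_nonneg T hsymm hnonneg n (T v)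
    rwa [← hsymm, ← Module.End.mul_apply, ← pow_succ', ← Module.End.mul_apply, ← pow_succ] at h

/-- Log-convexity of the moments, from the discriminant of
`t ↦ ⟪T ^ n (u + t T u), u + t T u⟫`. -/
lemma inner_pow_apply_sq_le {V : Type*} [NormedAddCommGroup V] [InnerProductSpace ℝ V]
    (T : V →ₗ[ℝ] V) (hsymm : ∀ v w : V, ⟪T v, w⟫ = ⟪v, T w⟫) (hnonneg : ∀ v : V, 0 ≤ ⟪T v, v⟫)
    (u : V) (n : ℕ) :
    ⟪(T ^ (n + 1)) u, u⟫ ^ 2 ≤ ⟪(T ^ n) u, u⟫ * ⟪(T ^ (n + 2)) u, u⟫ := by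
  have h1 : ⟪(T ^ n) (T u), u⟫ = ⟪(T ^ (n + 1)) u, u⟫ := by
    rw [← Module.End.mul_apply, ← pow_succ]
  have h2 : ⟪(T ^ n) u, T u⟫ = ⟪(T ^ (n + 1)) u, u⟫ := by
    rw [← hsymm, ← Module.End.mul_apply, ← pow_succ']
  have h3 : ⟪(T ^ n) (T u), T u⟫ = ⟪(T ^ (n + 2)) u, u⟫ := by
    rw [← hsymm, ← Module.End.mul_apply, ← pow_succ', ← Module.End.mul_apply, ← pow_succ]
  have hd : discrim ⟪(T ^ (n + 2)) u, u⟫ (2 * ⟪(T ^ (n + 1)) u, u⟫) ⟪(T ^ n) u, u⟫ ≤ 0 := by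
    refine discrim_le_zero fun t => ?_
    have h := inner_pow_apply_self_nonneg T hsymm hnonneg n (u + t • T u)
    simp only [map_add, map_smul, inner_add_left, inner_add_right, real_inner_smul_left,
      real_inner_smul_right, h1, h2, h3] at h
    linarith
  unfold discrim at hd
  linarith

/-- The comparison of consecutive terms with `a 0`: the sequence `a n ^ (1 / n)` increases once
`a` is normalised by `a 0 = 1`. -/
lemma logConvex_pow_succ_le (a : ℕ → ℝ) (h0 : ∀ n, 0 ≤ a n)
    (h : ∀ n, a (n + 1) ^ 2 ≤ a n * a (n + 2)) (n : ℕ) :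
    a n ^ (n + 1) ≤ a (n + 1) ^ n * a 0 := by
  induction n with
  | zero => simp
  | succ n ih =>
    rcases (h0 (n + 1)).eq_or_lt with hz | hpos
    · rw [← hz, zero_pow (by omega)]
      exact mul_nonneg (pow_nonneg (h0 _) _) (h0 0)
    · refine le_of_mul_le_mul_left ?_ (pow_pos hpos n)
      calc a (n + 1) ^ n * a (n + 1) ^ (n + 1 + 1) = (a (n + 1) ^ 2) ^ (n + 1) := by ring
        _ ≤ (a n * a (n + 2)) ^ (n + 1) := pow_le_pow_left₀ (sq_nonneg _) (h n) _
        _ = a n ^ (n + 1) * a (n + 2) ^ (n + 1) := mul_pow _ _ _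
        _ ≤ (a (n + 1) ^ n * a 0) * a (n + 2) ^ (n + 1) :=
          mul_le_mul_of_nonneg_right ih (pow_nonneg (h0 _) _)
        _ = a (n + 1) ^ n * (a (n + 1 + 1) ^ (n + 1) * a 0) := by ring

lemma logConvex_pow_le (a : ℕ → ℝ) (h0 : ∀ n, 0 ≤ a n)
    (h : ∀ n, a (n + 1) ^ 2 ≤ a n * a (n + 2)) (r d : ℕ) :
    a r ^ (r + d) ≤ a (r + d) ^ r * a 0 ^ d := by
  induction d with
  | zero => simp
  | succ d ih =>
    rcases Nat.eq_zero_or_pos (r + d) with hz | hpos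
    · obtain ⟨rfl, rfl⟩ : r = 0 ∧ d = 0 := by omega
      simp
    -- Both sides are compared after raising to the power `r + d`.
    · refine le_of_pow_le_pow_left₀ hpos.ne'
        (mul_nonneg (pow_nonneg (h0 _) _) (pow_nonneg (h0 _) _)) ?_
      calc (a r ^ (r + (d + 1))) ^ (r + d) = (a r ^ (r + d)) ^ (r + d + 1) := by
            rw [← pow_mul, ← pow_mul]; congr 1; ring
        _ ≤ (a (r + d) ^ r * a 0 ^ d) ^ (r + d + 1) :=
          pow_le_pow_left₀ (pow_nonneg (h0 _) _) ih _
        _ = (a (r + d) ^ (r + d + 1)) ^ r * a 0 ^ (d * (r + d + 1)) := by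
          rw [mul_pow, ← pow_mul, ← pow_mul, ← pow_mul, mul_comm r]
        _ ≤ (a (r + d + 1) ^ (r + d) * a 0) ^ r * a 0 ^ (d * (r + d + 1)) :=
          mul_le_mul_of_nonneg_right
            (pow_le_pow_left₀ (pow_nonneg (h0 _) _) (logConvex_pow_succ_le a h0 h _) _)
            (pow_nonneg (h0 _) _)
        _ = (a (r + (d + 1)) ^ r * a 0 ^ (d + 1)) ^ (r + d) := by
          rw [← add_assoc, mul_pow, mul_pow, ← pow_mul, ← pow_mul, ← pow_mul, mul_assoc,
            ← pow_add, mul_comm r]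
          congr 2
          ring

/-- Hook's moment inequality for nonnegative symmetric linear operators on a real inner
product space: `⟨T^r u, u⟩ ≤ ⟨T^q u, u⟩^{r/q} ⟨u, u⟩^{1−r/q}` for all `0 ≤ r ≤ q`, `q ≥ 1`. -/
theorem hook_moment_inequality {V : Type*} [NormedAddCommGroup V] [InnerProductSpace ℝ V]
    (T : V →ₗ[ℝ] V)
    (hsymm : ∀ v w : V, ⟪T v, w⟫ = ⟪v, T w⟫)
    (hnonneg : ∀ v : V, 0 ≤ ⟪T v, v⟫)
    (r q : ℕ) (hrq : r ≤ q) (hq : 1 ≤ q) (u : V) :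
    ⟪(T ^ r) u, u⟫ ≤ ⟪(T ^ q) u, u⟫ ^ ((r : ℝ) / q) * ⟪u, u⟫ ^ (1 - (r : ℝ) / q) := by
  have hpos := fun n => inner_pow_apply_self_nonneg T hsymm hnonneg n u
  have key := logConvex_pow_le (fun n => ⟪(T ^ n) u, u⟫) hpos
    (inner_pow_apply_sq_le T hsymm hnonneg u) r (q - r)
  simp only [Nat.add_sub_cancel' hrq, pow_zero, Module.End.one_apply] at key
  have hu : 0 ≤ ⟪u, u⟫ := real_inner_self_nonneg
  have hq0 : (q : ℝ) ≠ 0 := by positivity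
  refine le_of_pow_le_pow_left₀ (n := q) (by omega)
    (mul_nonneg (Real.rpow_nonneg (hpos q) _) (Real.rpow_nonneg hu _)) (key.trans_eq ?_)
  rw [mul_pow, ← Real.rpow_mul_natCast (hpos q), ← Real.rpow_mul_natCast hu, sub_mul, one_mul,
    div_mul_cancel₀ _ hq0, ← Nat.cast_sub hrq, Real.rpow_natCast, Real.rpow_natCast]
end

section
/- Let V be a real inner product space and T : V → V a linear map that is symmetric (⟨Tv, w⟩ = ⟨v, Tw⟩ for all v, w ∈ V) and nonnegative (⟨Tv, v⟩ ≥ 0 for all v ∈ V). Suppose u ∈ V satisfies ⟨u, u⟩ = 1 and T^q u = λ u for some integer q ≥ 1 and some real λ. Then λ ≥ 0, and for every integer 0 ≤ r ≤ q, ⟨T^r u, u⟩ ≤ λ^{r/q}. -/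
/-!
The vector `u` is in fact an eigenvector of `T` itself, with eigenvalue `μ = λ^{1/q}`, so that the
claimed inequality is an equality. If `μ > 0`, factor `T^q - μ^q = (∑ i < q, T^i μ^(q-1-i)) (T - μ)`
and set `w = T u - μ u`. The sum kills `w`; pairing it with `w` gives a sum of nonnegative terms
whose `i = 0` term is `μ^(q-1) ‖w‖²`, whence `w = 0` (`eigenvector_of_pow_of_pos`). If `λ = 0`,
symmetry gives `‖T^(k+1) u‖² = ⟪T^(k+2) u, T^k u⟫`, so `T^q u = 0` descends to `T u = 0`
(`map_eq_zero_of_pow`).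
-/

open scoped RealInnerProductSpace

section

variable {V : Type*} [NormedAddCommGroup V] [InnerProductSpace ℝ V] {T : V →ₗ[ℝ] V}

/-- Powers of a nonnegative symmetric operator are nonnegative: move one factor of `T` across
the inner product to lower the exponent by two. -/
lemma inner_pow_nonneg (hsymm : ∀ v w : V, ⟪T v, w⟫ = ⟪v, T w⟫) (hnonneg : ∀ v : V, 0 ≤ ⟪T v, v⟫) :
    ∀ (k : ℕ) (v : V), 0 ≤ ⟪(T ^ k) v, v⟫
  | 0, v => by simp
  | 1, v => by simpa using hnonneg v
  | k + 2, v => by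
    have h : (T ^ (k + 2)) v = T ((T ^ k) (T v)) := by
      rw [pow_succ, pow_succ']
      rfl
    rw [h, hsymm]
    exact inner_pow_nonneg hsymm hnonneg k (T v)

lemma map_eq_zero_of_pow (hsymm : ∀ v w : V, ⟪T v, w⟫ = ⟪v, T w⟫) (u : V) :
    ∀ n : ℕ, (T ^ (n + 1)) u = 0 → T u = 0
  | 0, h => by simpa using h
  | n + 1, h => by
    apply map_eq_zero_of_pow hsymm u n
    have h1 : (T ^ (n + 1)) u = T ((T ^ n) u) := by rw [pow_succ']; rfl
    have h2 : T ((T ^ (n + 1)) u) = 0 := by rw [← h, pow_succ' T (n + 1)]; rfl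
    rw [← inner_self_eq_zero (𝕜 := ℝ)]
    nth_rewrite 2 [h1]
    rw [← hsymm, h2, inner_zero_left]

lemma eigenvector_of_pow_of_pos (hsymm : ∀ v w : V, ⟪T v, w⟫ = ⟪v, T w⟫)
    (hnonneg : ∀ v : V, 0 ≤ ⟪T v, v⟫) {q : ℕ} (hq : 1 ≤ q) {u : V} {μ : ℝ} (hμ : 0 < μ)
    (h : (T ^ q) u = μ ^ q • u) : T u = μ • u := by
  set w := T u - μ • u with hw
  have hgeom := congrArg (fun S : Module.End ℝ V => S u)
    (Commute.geom_sum₂_mul (Algebra.commutes μ T).symm q :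
      (∑ i ∈ Finset.range q, T ^ i * (algebraMap ℝ (Module.End ℝ V) μ) ^ (q - 1 - i)) *
        (T - algebraMap ℝ (Module.End ℝ V) μ) = _)
  have hsum : ∑ i ∈ Finset.range q, μ ^ (q - 1 - i) • (T ^ i) w = 0 := by
    simpa [← map_pow, Module.algebraMap_end_apply, h, LinearMap.sum_apply, ← hw] using hgeom
  have hinner : ∑ i ∈ Finset.range q, μ ^ (q - 1 - i) * ⟪(T ^ i) w, w⟫ = 0 := by
    simpa [sum_inner, real_inner_smul_left] using congrArg (fun x : V => ⟪x, w⟫) hsum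
  have hterm := (Finset.sum_eq_zero_iff_of_nonneg fun i _ =>
    mul_nonneg (pow_nonneg hμ.le _) (inner_pow_nonneg hsymm hnonneg i w)).1 hinner 0
      (Finset.mem_range.2 hq)
  have hw0 : ⟪w, w⟫ = 0 := by
    simpa only [pow_zero, Module.End.one_apply] using
      (mul_eq_zero.1 hterm).resolve_left (pow_pos hμ _).ne'
  exact sub_eq_zero.1 (inner_self_eq_zero.1 hw0)

end



/-- Abstract form of Cases II/III in the proof of the paper's Lemma 3.1:
if `T` is a nonnegative symmetric linear operator, `⟨u,u⟩ = 1` and `T^q u = λ u` with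
`q ≥ 1`, then `λ ≥ 0` and `⟨T^r u, u⟩ ≤ λ^{r/q}` for every `0 ≤ r ≤ q`. -/
theorem hook_moment_eigenvector {V : Type*} [NormedAddCommGroup V] [InnerProductSpace ℝ V]
    (T : V →ₗ[ℝ] V)
    (hsymm : ∀ v w : V, ⟪T v, w⟫ = ⟪v, T w⟫)
    (hnonneg : ∀ v : V, 0 ≤ ⟪T v, v⟫)
    (q : ℕ) (hq : 1 ≤ q) (u : V) (hu : ⟪u, u⟫ = 1)
    (lam : ℝ) (heig : (T ^ q) u = lam • u) :
    0 ≤ lam ∧ ∀ r : ℕ, r ≤ q → ⟪(T ^ r) u, u⟫ ≤ lam ^ ((r : ℝ) / q) := by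
  have hq0 : q ≠ 0 := by omega
  have hlam : 0 ≤ lam := by
    simpa only [heig, real_inner_smul_left, hu, mul_one] using inner_pow_nonneg hsymm hnonneg q u
  refine ⟨hlam, fun r _ => ?_⟩
  set μ : ℝ := lam ^ ((q : ℝ)⁻¹) with hμ
  have hpow : μ ^ q = lam := Real.rpow_inv_natCast_pow hlam hq0
  have hTu : T u = μ • u := by
    rcases hlam.eq_or_lt with h0 | hpos
    · have hμ0 : μ = 0 := eq_zero_of_pow_eq_zero (hpow.trans h0.symm)
      rw [hμ0, zero_smul]
      refine map_eq_zero_of_pow hsymm u (q - 1) ?_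
      rw [Nat.sub_add_cancel hq, heig, ← h0, zero_smul]
    · exact eigenvector_of_pow_of_pos hsymm hnonneg hq (Real.rpow_pos_of_pos hpos _)
        (by rw [hpow, heig])
  have hTr : ∀ k : ℕ, (T ^ k) u = μ ^ k • u := by
    intro k
    induction k with
    | zero => simp
    | succ k ih =>
      rw [pow_succ' T, Module.End.mul_apply, ih, map_smul, hTu, smul_smul, pow_succ]
  rw [hTr, real_inner_smul_left, hu, mul_one, hμ, ← Real.rpow_mul_natCast hlam]
  exact le_of_eq (by congr 1; ring)
end
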